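/- arXiv:1501.07724 — 2 statements merged into one kernel-verified Lean document; each statement's English description precedes it below -/
import Mathlib

section
/- Let p be a prime and let ℤ/p act linearly on S^n via an orthogonal representation ρ : ℤ/p → O(n+1) with fixed point set the great k-sphere S^k, where 0 < k < n. If both n and k are odd, then TC_{ℤ/p}(S^n) = 2. -/
open Set unitInterval

namespace PaperTC

variable {G X : Type*}

/-- The orbit of `x` under the action `act`. -/
def orbit (act : G → X → X) (x : X) : Set X := {y | ∃ g, act g x = y}

/-- The fixed point set of the action `act`. -/
def fixedSet (act : G → X → X) : Set X := {x | ∀ g, act g x = x}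

/-- The fixed point set of a subset `S` of the acting group. -/
def fixedSetOf (act : G → X → X) (S : Set G) : Set X := {x | ∀ g ∈ S, act g x = x}

/-- `minCover P` is the least `k ≥ 1` satisfying `P k`, as an element of `ℕ∞`
(equal to `∞` if there is no such `k`). -/
noncomputable def minCover (P : ℕ → Prop) : ℕ∞ :=
  sInf {k : ℕ∞ | ∃ m : ℕ, k = m ∧ 1 ≤ m ∧ P m}

section Plain

variable (Y : Type*) [TopologicalSpace Y]

/-- `Y × Y` can be covered by `k` open sets each admitting a motion planner. -/
def TCcover (k : ℕ) : Prop :=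
  ∃ U : Fin k → Set (Y × Y),
    (∀ i, IsOpen (U i)) ∧ (⋃ i, U i) = univ ∧
    ∀ i, ∃ s : Y × Y → C(I, Y),
      ContinuousOn s (U i) ∧ ∀ p ∈ U i, s p 0 = p.1 ∧ s p 1 = p.2

/-- Topological complexity (non-reduced, possibly infinite). -/
noncomputable def TC : ℕ∞ := minCover (TCcover Y)

/-- `Y` can be covered by `k` open sets, each of which can be deformed within `Y`
to a point. -/
def catCover (k : ℕ) : Prop :=
  ∃ U : Fin k → Set Y,
    (∀ i, IsOpen (U i)) ∧ (⋃ i, U i) = univ ∧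
    ∀ i, ∃ H : Y × I → Y,
      ContinuousOn H (U i ×ˢ (univ : Set I)) ∧ (∀ x ∈ U i, H (x, 0) = x) ∧
      ∃ y₀, ∀ x ∈ U i, H (x, 1) = y₀

/-- Non-reduced Lusternik–Schnirelmann category. -/
noncomputable def cat : ℕ∞ := minCover (catCover Y)

end Plain

section Equivariant

variable [TopologicalSpace X] (act : G → X → X)

/-- `X × X` can be covered by `k` invariant open sets each admitting an
equivariant motion planner. -/
def eqTCcover (k : ℕ) : Prop :=
  ∃ U : Fin k → Set (X × X),
    (∀ i, IsOpen (U i)) ∧ (⋃ i, U i) = univ ∧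
    ∀ i, (∀ g p, p ∈ U i → (act g p.1, act g p.2) ∈ U i) ∧
      ∃ s : X × X → C(I, X),
        ContinuousOn s (U i) ∧
        (∀ p ∈ U i, s p 0 = p.1 ∧ s p 1 = p.2) ∧
        (∀ g p, p ∈ U i → ∀ t : I, s (act g p.1, act g p.2) t = act g (s p t))

/-- Equivariant topological complexity `TC_G` of Colman and Grant. -/
noncomputable def eqTC : ℕ∞ := minCover (eqTCcover act)

/-- `X × X` can be covered by `k` `(G × G)`-invariant open sets, each admitting a
`(G × G)`-equivariant section of `π^G : P X ×_{X/G} P X → X × X`; such a section is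
recorded by a pair of paths `s₁ p`, `s₂ p`, with the orbit of the endpoint of the first
equal to the orbit of the starting point of the second. -/
def invTCcover (k : ℕ) : Prop :=
  ∃ U : Fin k → Set (X × X),
    (∀ i, IsOpen (U i)) ∧ (⋃ i, U i) = univ ∧
    ∀ i, (∀ g₁ g₂ : G, ∀ p, p ∈ U i → (act g₁ p.1, act g₂ p.2) ∈ U i) ∧
      ∃ s₁ s₂ : X × X → C(I, X),
        ContinuousOn s₁ (U i) ∧ ContinuousOn s₂ (U i) ∧
        (∀ p ∈ U i, s₁ p 0 = p.1 ∧ s₂ p 1 = p.2 ∧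
          orbit act (s₁ p 1) = orbit act (s₂ p 0)) ∧
        (∀ g₁ g₂ : G, ∀ p, p ∈ U i → ∀ t : I,
          s₁ (act g₁ p.1, act g₂ p.2) t = act g₁ (s₁ p t) ∧
          s₂ (act g₁ p.1, act g₂ p.2) t = act g₂ (s₂ p t))

/-- Invariant topological complexity `TC^G` of Lubawski and Marzantowicz. -/
noncomputable def invTC : ℕ∞ := minCover (invTCcover act)

/-- The invariant open set `U` is `G`-compressible into `A`: the inclusion `U ↪ X` is
`G`-equivariantly homotopic to a `G`-map with values in `A`. -/
def GCompressible (A : Set X) (U : Set X) : Prop :=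
  (∀ g x, x ∈ U → act g x ∈ U) ∧
  ∃ H : X × I → X,
    ContinuousOn H (U ×ˢ (univ : Set I)) ∧ (∀ x ∈ U, H (x, 0) = x) ∧
    (∀ g x, x ∈ U → ∀ t : I, H (act g x, t) = act g (H (x, t))) ∧
    (∀ x ∈ U, H (x, 1) ∈ A)

/-- A `G`-categorical set: compressible into a single orbit. -/
def GCategorical (U : Set X) : Prop :=
  ∃ x₀ : X, GCompressible act (orbit act x₀) U

/-- `X` can be covered by `k` open `G`-categorical sets. -/
def catGCover (k : ℕ) : Prop :=
  ∃ U : Fin k → Set X,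
    (∀ i, IsOpen (U i)) ∧ (⋃ i, U i) = univ ∧ ∀ i, GCategorical act (U i)

/-- Equivariant Lusternik–Schnirelmann category `cat_G`. -/
noncomputable def catG : ℕ∞ := minCover (catGCover act)

/-- `X` can be covered by `k` open sets `G`-compressible into `{star}`. -/
def pointedCatGCover (star : X) (k : ℕ) : Prop :=
  ∃ U : Fin k → Set X,
    (∀ i, IsOpen (U i)) ∧ (⋃ i, U i) = univ ∧
    ∀ i, GCompressible act {star} (U i)

/-- The pointed equivariant category `_{{⋆}}cat_G(X)`. -/
noncomputable def pointedCatG (star : X) : ℕ∞ := minCover (pointedCatGCover act star)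

/-- `X` is `G`-contractible: the identity is `G`-homotopic to a map with values in a
single orbit. -/
def GContractible : Prop :=
  ∃ H : X × I → X,
    Continuous H ∧ (∀ x, H (x, 0) = x) ∧
    (∀ g x, ∀ t : I, H (act g x, t) = act g (H (x, t))) ∧
    ∃ x₀ : X, ∀ x, H (x, 1) ∈ orbit act x₀

end Equivariant

/-- The orbit space `X/G` with the quotient topology. -/
abbrev OrbitSpace (act : G → X → X) : Type _ := Quot (fun x y => ∃ g, act g x = y)

end PaperTC
namespace PaperTC

/-- The unit sphere `S^n ⊆ ℝ^{n+1}` (with the Euclidean metric). -/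
abbrev Sph (n : ℕ) : Set (EuclideanSpace ℝ (Fin (n + 1))) := Metric.sphere 0 1

/-- The action of `G` on the unit sphere `S^n` obtained by restricting an orthogonal
representation of `G` on `ℝ^{n+1}`. -/
noncomputable def sphereAct {G : Type*} [Monoid G] {n : ℕ}
    (ρ : G →* (EuclideanSpace ℝ (Fin (n + 1)) ≃ₗᵢ[ℝ] EuclideanSpace ℝ (Fin (n + 1)))) :
    G → ↥(Sph n) → ↥(Sph n) := fun g x =>
  ⟨ρ g x, mem_sphere_zero_iff_norm.mpr (by
    rw [(ρ g).norm_map]; exact mem_sphere_zero_iff_norm.mp x.2)⟩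

end PaperTC


theorem aux_det_pos {E : Type*} [NormedAddCommGroup E] [NormedSpace ℝ E] [FiniteDimensional ℝ E]
    (A : E →L[ℝ] E) (hA : ‖A‖ ≤ 1 / 2) : 0 < (1 + A).det := by
  have hc : Continuous (fun s : ℝ => (1 + s • A).det) :=
    ContinuousLinearMap.continuous_det.comp (by fun_prop)
  have hne : ∀ s ∈ Icc (0:ℝ) 1, (1 + s • A).det ≠ 0 := by
    intro s hs h0
    have h1 : LinearMap.det ((1 + s • A : E →L[ℝ] E) : E →ₗ[ℝ] E) = 0 := h0
    have := LinearMap.bot_lt_ker_of_det_eq_zero h1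
    obtain ⟨x, hx, hx0⟩ := (Submodule.ne_bot_iff _).1 this.ne'
    have hx' : x + s • A x = 0 := by simpa using hx
    have h2 : ‖x‖ ≤ 1 / 2 * ‖x‖ := by
      have : x = -(s • A x) := eq_neg_of_add_eq_zero_left hx'
      calc ‖x‖ = ‖s • A x‖ := by rw [← norm_neg (s • A x), ← this]
        _ = |s| * ‖A x‖ := by rw [norm_smul, Real.norm_eq_abs]
        _ ≤ 1 * (1 / 2 * ‖x‖) := by
          gcongr
          · rw [abs_of_nonneg hs.1]; exact hs.2
          · exact (A.le_opNorm x).trans (by gcongr)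
        _ = _ := by ring
    have : 0 < ‖x‖ := norm_pos_iff.2 hx0
    linarith
  by_contra hneg
  push Not at hneg
  have hiv := intermediate_value_Icc' (zero_le_one' ℝ) hc.continuousOn
  have h0 : (0:ℝ) ∈ Icc ((1 + (1:ℝ) • A).det) ((1 + (0:ℝ) • A).det) := by
    refine ⟨by simpa using hneg, ?_⟩
    have : (1 + (0:ℝ) • A).det = 1 := by
      rw [zero_smul, add_zero]; exact LinearMap.det_id
    rw [this]; exact zero_le_one
  obtain ⟨s, hs, hs0⟩ := hiv h0
  exact hne s hs hs0

theorem aux_interp (d : ℕ) (v : ℕ → ℝ) (hv : Function.Injective v) :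
    ∃ c : ℕ → ℝ, (∑ i ∈ Finset.range (d + 1), c i = 1) ∧
      ∀ q : Polynomial ℝ, q.natDegree ≤ d →
        q.eval 1 = ∑ i ∈ Finset.range (d + 1), c i * q.eval (v i) := by
  have key : ∀ q : Polynomial ℝ, q.natDegree ≤ d → q.eval 1 = ∑ i ∈ Finset.range (d + 1),
      (Lagrange.basis (Finset.range (d+1)) v i).eval 1 * q.eval (v i) := by
    intro q hq
    have h := Lagrange.eq_interpolate (s := Finset.range (d+1)) (v := v) (f := q)
      hv.injOn (by
        rw [Finset.card_range]
        exact (Polynomial.degree_le_natDegree).trans_lt (by exact_mod_cast Nat.lt_succ_of_le hq))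
    conv_lhs => rw [h]
    rw [Lagrange.interpolate_apply, Polynomial.eval_finsetSum]
    refine Finset.sum_congr rfl fun i _ => ?_
    simp [mul_comm]
  refine ⟨_, ?_, key⟩
  have := key 1 (by simp)
  simpa using this.symm

theorem aux_poly {E : Type*} [NormedAddCommGroup E] [NormedSpace ℝ E] [FiniteDimensional ℝ E]
    (A : E →L[ℝ] E) : ∃ q : Polynomial ℝ, q.natDegree ≤ Module.finrank ℝ E ∧
      ∀ t : ℝ, q.eval t = (1 + t • A).det := by
  let b := Module.finBasis ℝ E
  let M := LinearMap.toMatrix b b (A : E →ₗ[ℝ] E)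
  refine ⟨Matrix.det ((Polynomial.X : Polynomial ℝ) • M.map Polynomial.C +
    (1 : Matrix _ _ ℝ).map Polynomial.C), ?_, ?_⟩
  · simpa using Polynomial.natDegree_det_X_add_C_le M 1
  · intro t
    have h1 : (1 + t • A).det = LinearMap.det ((1 + t • A : E →L[ℝ] E) : E →ₗ[ℝ] E) := rfl
    rw [h1, ← LinearMap.det_toMatrix b, ← Polynomial.coe_evalRingHom, RingHom.map_det]
    congr 1
    ext i j
    simp [M, LinearMap.toMatrix_apply, Matrix.one_apply, Finsupp.single_apply]
    split_ifs <;> simp_all [eq_comm, add_comm, mul_comm]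

theorem aux_vol {E : Type*} [NormedAddCommGroup E] [InnerProductSpace ℝ E] [FiniteDimensional ℝ E]
    [MeasurableSpace E] [BorelSpace E] (μ : MeasureTheory.Measure E) [μ.IsAddHaarMeasure]
    (f : E → E) (hf : ContDiff ℝ 1 f) (h2 : ∀ x, ‖f x‖ = 2)
    (hb : ∀ x, ‖x‖ = 2 → f x = x) (L : ℝ) (hL : ∀ x ∈ Metric.closedBall (0:E) 2,
      ‖fderiv ℝ f x - 1‖ ≤ L) (t : ℝ) (ht0 : 0 < t) (ht1 : t < 1) (htL : t * L ≤ 1 / 2) :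
    ∫ x in Metric.ball (0:E) 2, (1 + t • (fderiv ℝ f x - 1)).det ∂μ
      = μ.real (Metric.ball (0:E) 2) := by
  set h : E → E := fun x => x + t • (f x - x) with hh
  have hd : ∀ x, HasFDerivAt h (1 + t • (fderiv ℝ f x - 1)) x := by
    intro x
    have h1 : HasFDerivAt f (fderiv ℝ f x) x :=
      (hf.differentiable one_ne_zero x).hasFDerivAt
    exact (hasFDerivAt_id x).add ((h1.sub (hasFDerivAt_id x)).const_smul t)
  have hlip : ∀ x ∈ Metric.closedBall (0:E) 2, ∀ y ∈ Metric.closedBall (0:E) 2,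
      ‖(h x - h y) - (x - y)‖ ≤ 1 / 2 * ‖x - y‖ := by
    intro x hx y hy
    have := (convex_closedBall (0:E) 2).norm_image_sub_le_of_norm_hasFDerivWithin_le
      (f := fun x => t • (f x - x)) (f' := fun x => t • (fderiv ℝ f x - 1)) (C := 1/2)
      (fun z _ => by
        have h1 : HasFDerivAt f (fderiv ℝ f z) z :=
          (hf.differentiable one_ne_zero z).hasFDerivAt
        exact ((h1.sub (hasFDerivAt_id z)).const_smul t).hasFDerivWithinAt)
      (fun z hz => by
        rw [norm_smul, Real.norm_eq_abs, abs_of_pos ht0]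
        exact (mul_le_mul_of_nonneg_left (hL z hz) ht0.le).trans htL) hy hx
    convert this using 2
    simp only [hh]; abel
  have hinj : InjOn h (Metric.closedBall (0:E) 2) := by
    intro x hx y hy hxy
    have := hlip x hx y hy
    rw [hxy, sub_self, zero_sub, norm_neg] at this
    have h0 : ‖x - y‖ ≤ 0 := by linarith [norm_nonneg (x - y)]
    exact sub_eq_zero.1 (norm_le_zero_iff.1 h0)
  have hcont : Continuous h := by
    have := hf.continuous
    fun_prop
  have hopen : IsOpen (h '' Metric.ball (0:E) 2) := by
    rcases subsingleton_or_nontrivial E with hs | hs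
    · exact isOpen_discrete _
    have ha : ApproximatesLinearOn h ((ContinuousLinearEquiv.refl ℝ E : E ≃L[ℝ] E) : E →L[ℝ] E)
        (Metric.ball (0:E) 2) (1/2) := by
      intro x hx y hy
      simpa using hlip x (Metric.ball_subset_closedBall hx) y (Metric.ball_subset_closedBall hy)
    refine ha.open_image (ContinuousLinearEquiv.refl ℝ E).toNonlinearRightInverse
      Metric.isOpen_ball (Or.inr ?_)
    have : (ContinuousLinearEquiv.refl ℝ E).toNonlinearRightInverse.nnnorm = 1 := by
      change ‖((ContinuousLinearEquiv.refl ℝ E).symm : E →L[ℝ] E)‖₊ = 1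
      simp
    rw [this]
    simp only [inv_one]
    rw [← NNReal.coe_lt_coe]; norm_num
  have hbd : ∀ x, ‖x‖ = 2 → h x = x := by
    intro x hx; simp [hh, hb x hx]
  have hmaps : ∀ x ∈ Metric.ball (0:E) 2, h x ∈ Metric.ball (0:E) 2 := by
    intro x hx
    rw [mem_ball_zero_iff] at hx ⊢
    have : h x = (1 - t) • x + t • f x := by simp only [hh]; module
    rw [this]
    calc _ ≤ ‖(1 - t) • x‖ + ‖t • f x‖ := norm_add_le _ _
      _ = (1 - t) * ‖x‖ + t * 2 := by
        rw [norm_smul, norm_smul, h2, Real.norm_eq_abs, Real.norm_eq_abs, abs_of_pos ht0,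
          abs_of_pos (by linarith)]
      _ < 2 := by nlinarith
  have himg : h '' Metric.ball (0:E) 2 = Metric.ball (0:E) 2 := by
    refine Subset.antisymm (image_subset_iff.2 hmaps) ?_
    have hcpt : IsCompact (h '' Metric.closedBall (0:E) 2) :=
      (isCompact_closedBall (0:E) 2).image hcont
    have hpre : IsPreconnected (Metric.ball (0:E) 2) := (convex_ball (0:E) 2).isPreconnected
    by_contra hns
    obtain ⟨y, hy, hyn⟩ := not_subset.1 hns
    have hyn' : y ∉ h '' Metric.closedBall (0:E) 2 := by
      rintro ⟨x, hx, rfl⟩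
      rcases (mem_closedBall_zero_iff.1 hx).lt_or_eq with h1 | h1
      · exact hyn ⟨x, mem_ball_zero_iff.2 h1, rfl⟩
      · rw [hbd x h1, mem_ball_zero_iff] at hy; linarith
    obtain ⟨z, hz, hz1, hz2⟩ := hpre _ _ hopen hcpt.isClosed.isOpen_compl (by
        intro z hz
        by_cases hzz : z ∈ h '' Metric.closedBall (0:E) 2
        · left
          obtain ⟨x, hx, rfl⟩ := hzz
          rcases (mem_closedBall_zero_iff.1 hx).lt_or_eq with h1 | h1
          · exact ⟨x, mem_ball_zero_iff.2 h1, rfl⟩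
          · rw [hbd x h1, mem_ball_zero_iff] at hz; linarith
        · right; exact hzz)
      ⟨h 0, hmaps 0 (by simp), 0, by simp, rfl⟩ ⟨y, hy, hyn'⟩
    exact hz2 (image_mono Metric.ball_subset_closedBall hz1)
  have hcv := MeasureTheory.integral_image_eq_integral_abs_det_fderiv_smul μ
    (s := Metric.ball (0:E) 2) (f := h) (f' := fun x => 1 + t • (fderiv ℝ f x - 1))
    Metric.isOpen_ball.measurableSet
    (fun x _ => (hd x).hasFDerivWithinAt) (hinj.mono Metric.ball_subset_closedBall)
    (fun _ => (1:ℝ))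
  rw [himg] at hcv
  simp only [smul_eq_mul, mul_one] at hcv
  rw [MeasureTheory.setIntegral_congr_fun (g := fun x => |(1 + t • (fderiv ℝ f x - 1)).det|)
    Metric.isOpen_ball.measurableSet, ← hcv]
  · simp
  · intro x hx
    refine (abs_of_pos (aux_det_pos _ ?_)).symm
    rw [norm_smul, Real.norm_eq_abs, abs_of_pos ht0]
    exact (mul_le_mul_of_nonneg_left (hL x (Metric.ball_subset_closedBall hx)) ht0.le).trans htL

theorem aux_no_smooth {E : Type*} [NormedAddCommGroup E] [InnerProductSpace ℝ E]
    [FiniteDimensional ℝ E]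
    (f : E → E) (hf : ContDiff ℝ 1 f) (h2 : ∀ x, ‖f x‖ = 2)
    (hb : ∀ x, ‖x‖ = 2 → f x = x) : False := by
  borelize E
  let μ : MeasureTheory.Measure E := MeasureTheory.Measure.addHaar
  have hc : Continuous (fderiv ℝ f) := hf.continuous_fderiv one_ne_zero
  obtain ⟨L, hL⟩ := (isCompact_closedBall (0:E) 2).exists_bound_of_continuousOn
    (f := fun x => fderiv ℝ f x - 1) (by fun_prop)
  have hL0 : 0 ≤ L := (norm_nonneg _).trans (hL 0 (by simp))
  let v : ℕ → ℝ := fun i => 1 / ((2 * (L + 1)) * (i + 1))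
  have hv : Function.Injective v := by
    intro i j hij
    simp only [v] at hij
    have h1 : (2 * (L + 1)) * ((i:ℝ) + 1) = (2 * (L + 1)) * ((j:ℝ) + 1) := by
      simpa using hij
    have := mul_left_cancel₀ (by positivity) h1
    exact_mod_cast add_right_cancel this
  have hvb : ∀ i, 0 < v i ∧ v i < 1 ∧ v i * L ≤ 1 / 2 := by
    intro i
    have hi : (0:ℝ) ≤ i := Nat.cast_nonneg i
    have hpos : 0 < (2 * (L + 1)) * ((i:ℝ) + 1) := by positivity
    refine ⟨by positivity, ?_, ?_⟩
    · simp only [v]; rw [div_lt_one hpos]; nlinarith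
    · simp only [v]; rw [div_mul_eq_mul_div, div_le_iff₀ hpos]; nlinarith
  obtain ⟨c, hc1, hcq⟩ := aux_interp (Module.finrank ℝ E) v hv
  have hdet0 : ∀ x, (fderiv ℝ f x).det = 0 := by
    intro x
    by_contra hne
    have hne' : LinearMap.det ((fderiv ℝ f x : E →L[ℝ] E) : E →ₗ[ℝ] E) ≠ 0 := hne
    have hu := LinearMap.equivOfDetNeZero _ hne'
    have hsurj : Function.Surjective (fderiv ℝ f x) :=
      (LinearMap.equivOfDetNeZero _ hne').surjective
    obtain ⟨w, hw⟩ := hsurj (f x)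
    have h1 : HasFDerivAt f (fderiv ℝ f x) x :=
      (hf.differentiable one_ne_zero x).hasFDerivAt
    have h3 := h1.norm_sq
    have h4 : HasFDerivAt (fun x => ‖f x‖ ^ 2) (0 : E →L[ℝ] ℝ) x := by
      simp only [h2]; exact hasFDerivAt_const _ _
    have h5 := congrArg (fun l : E →L[ℝ] ℝ => l w) (h3.unique h4)
    simp [hw, h2] at h5
  have hpt : ∀ x, (0:ℝ) = ∑ i ∈ Finset.range (Module.finrank ℝ E + 1),
      c i * (1 + v i • (fderiv ℝ f x - 1)).det := by
    intro x
    obtain ⟨q, hq, hqe⟩ := aux_poly (fderiv ℝ f x - 1)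
    have := hcq q hq
    simp only [hqe] at this
    rw [← this]
    simp [hdet0]
  have hint : ∀ i, MeasureTheory.IntegrableOn
      (fun x => c i * (1 + v i • (fderiv ℝ f x - 1)).det) (Metric.ball (0:E) 2) μ := by
    intro i
    have hcon : Continuous (fun x => c i * (1 + v i • (fderiv ℝ f x - 1)).det) :=
      continuous_const.mul (ContinuousLinearMap.continuous_det.comp (by fun_prop))
    exact (hcon.continuousOn.integrableOn_compact (isCompact_closedBall (0:E) 2)).mono_set
      Metric.ball_subset_closedBall
  have hfin : (0:ℝ) = μ.real (Metric.ball (0:E) 2) := by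
    calc (0:ℝ) = ∫ x in Metric.ball (0:E) 2, (0:ℝ) ∂μ := by simp
      _ = ∫ x in Metric.ball (0:E) 2, ∑ i ∈ Finset.range (Module.finrank ℝ E + 1),
          c i * (1 + v i • (fderiv ℝ f x - 1)).det ∂μ := by
        congr 1; ext x; exact hpt x
      _ = ∑ i ∈ Finset.range (Module.finrank ℝ E + 1), c i * μ.real (Metric.ball (0:E) 2) := by
        rw [MeasureTheory.integral_finsetSum _ (fun i _ => hint i)]
        refine Finset.sum_congr rfl fun i _ => ?_
        rw [MeasureTheory.integral_const_mul,
          aux_vol μ f hf h2 hb L hL (v i) (hvb i).1 (hvb i).2.1 (hvb i).2.2]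
      _ = _ := by rw [← Finset.sum_mul, hc1, one_mul]
  have hp : 0 < μ.real (Metric.ball (0:E) 2) :=
    ENNReal.toReal_pos (Metric.measure_ball_pos μ _ two_pos).ne'
      MeasureTheory.measure_ball_lt_top.ne
  linarith

theorem aux_no_cont {E : Type*} [NormedAddCommGroup E] [InnerProductSpace ℝ E]
    [FiniteDimensional ℝ E]
    (g : E → E) (hg : Continuous g) (h1 : ∀ x, 1 ≤ ‖g x‖)
    (hb : ∀ x, 1 ≤ ‖x‖ → g x = x) : False := by
  have hu : Continuous (fun x => g x - x) := by fun_prop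
  have hsupp : HasCompactSupport (fun x => g x - x) := by
    refine HasCompactSupport.intro (isCompact_closedBall (0:E) 1) fun x hx => ?_
    rw [mem_closedBall_zero_iff, not_le] at hx
    rw [hb x hx.le, sub_self]
  have huc : UniformContinuous (fun x => g x - x) := hsupp.uniformContinuous_of_continuous hu
  obtain ⟨δ, hδ, hfδ⟩ := Metric.uniformContinuous_iff.mp huc (1/2) (by norm_num)
  obtain ⟨w, hw, hwa⟩ := hu.exists_contDiff_dist_le_of_forall_mem_ball_dist_le
    (lt_min hδ one_pos)
  have happ : ∀ x, ‖w x - (g x - x)‖ ≤ 1/2 := by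
    intro x
    rw [← dist_eq_norm]
    exact hwa x _ fun y hy => (hfδ (lt_of_lt_of_le hy (min_le_left _ _))).le
  have hz : ∀ x, ‖x‖ = 2 → w x = 0 := by
    intro x hx
    have h0 : g x - x = 0 := by rw [hb x (by linarith), sub_self]
    have := hwa x 0 (fun y hy => by
      have hy1 : dist y x < 1 := lt_of_lt_of_le hy (min_le_right _ _)
      have : 1 ≤ ‖y‖ := by
        rw [dist_eq_norm] at hy1
        have := norm_sub_norm_le x (x - y)
        rw [norm_sub_rev x y] at this
        simp only [sub_sub_cancel] at this
        linarith
      simp [hb y this, h0])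
    simpa [h0] using this
  have hne : ∀ x, x + w x ≠ 0 := by
    intro x hx
    have h3 : w x - (g x - x) = -(g x) := by
      rw [← sub_eq_zero]; rw [← hx]; abel
    have := happ x
    rw [h3, norm_neg] at this
    linarith [h1 x]
  have hwd : ContDiff ℝ 1 (fun x => x + w x) := contDiff_id.add (hw.of_le (by simp))
  refine aux_no_smooth (fun x => (2 / ‖x + w x‖) • (x + w x)) ?_ ?_ ?_
  · exact (contDiff_const.div (hwd.norm ℝ hne) (fun x => norm_ne_zero_iff.2 (hne x))).smul hwd
  · intro x
    have := norm_ne_zero_iff.2 (hne x)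
    rw [norm_smul, Real.norm_eq_abs, abs_of_nonneg (by positivity)]
    field_simp
  · intro x hx
    simp [hz x hx, hx]

namespace PaperTC

variable {n : ℕ}

/-- normalisation to the sphere -/
noncomputable def nrm (y0 : ↥(Sph n)) (v : EuclideanSpace ℝ (Fin (n + 1))) : ↥(Sph n) :=
  open Classical in
  if h : v = 0 then y0 else ⟨(‖v‖⁻¹) • v, by
    rw [mem_sphere_zero_iff_norm, norm_smul, norm_inv, norm_norm,
      inv_mul_cancel₀ (norm_ne_zero_iff.2 h)]⟩

theorem nrm_coe (y0 : ↥(Sph n)) (v : EuclideanSpace ℝ (Fin (n + 1))) (hv : v ≠ 0) :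
    (nrm y0 v : EuclideanSpace ℝ (Fin (n + 1))) = (‖v‖⁻¹) • v := by
  simp [nrm, hv]

theorem nrm_self (y0 : ↥(Sph n)) (v : ↥(Sph n)) : nrm y0 v.1 = v := by
  have h1 : ‖v.1‖ = 1 := mem_sphere_zero_iff_norm.1 v.2
  have h0 : v.1 ≠ 0 := by rw [← norm_ne_zero_iff, h1]; exact one_ne_zero
  apply Subtype.ext
  rw [nrm_coe y0 _ h0, h1, inv_one, one_smul]

theorem nrm_continuousOn (y0 : ↥(Sph n)) : ContinuousOn (nrm y0) {0}ᶜ := by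
  rw [Topology.IsInducing.subtypeVal.continuousOn_iff]
  have : ContinuousOn (fun v : EuclideanSpace ℝ (Fin (n + 1)) => (‖v‖⁻¹) • v) {0}ᶜ :=
    (continuous_norm.continuousOn.inv₀ (fun x hx => norm_ne_zero_iff.2 hx)).smul continuousOn_id
  exact this.congr fun v hv => nrm_coe y0 v hv

theorem not_cover_one {G : Type*} [Monoid G]
    (ρ : G →* (EuclideanSpace ℝ (Fin (n + 1)) ≃ₗᵢ[ℝ] EuclideanSpace ℝ (Fin (n + 1)))) :
    ¬ eqTCcover (sphereAct ρ) 1 := by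
  rintro ⟨U, -, hU, hs⟩
  obtain ⟨-, s, hsc, hse, -⟩ := hs 0
  have hU0 : U 0 = univ := by rw [← hU]; ext x; simp
  rw [hU0] at hsc hse
  have hsc' : Continuous s := continuousOn_univ.1 hsc
  obtain ⟨y0⟩ : Nonempty ↥(Sph n) :=
    ⟨⟨EuclideanSpace.single 0 1, by simp⟩⟩
  let τ : EuclideanSpace ℝ (Fin (n + 1)) → I := fun x => projIcc 0 1 zero_le_one (2 * ‖x‖ - 1)
  have hτ : Continuous τ := continuous_projIcc.comp (by fun_prop)
  let g : EuclideanSpace ℝ (Fin (n + 1)) → EuclideanSpace ℝ (Fin (n + 1)) := fun x =>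
    (max 1 ‖x‖) • (s (y0, nrm y0 x) (τ x)).1
  refine aux_no_cont g ?_ ?_ ?_
  · rw [continuous_iff_continuousAt]
    intro x
    by_cases hx : x = 0
    · have : g =ᶠ[nhds x] fun _ => y0.1 := by
        rw [hx]
        filter_upwards [Metric.ball_mem_nhds (0 : EuclideanSpace ℝ (Fin (n + 1)))
          (ε := 1/2) (by norm_num)] with z hz
        rw [mem_ball_zero_iff] at hz
        have h1 : τ z = 0 := projIcc_of_le_left _ (by linarith)
        simp only [g, h1, (hse _ (mem_univ _)).1]
        rw [max_eq_left (by linarith), one_smul]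
      exact continuousAt_const.congr this.symm
    · have h1 : ContinuousAt (nrm y0) x :=
        (nrm_continuousOn y0).continuousAt (isOpen_compl_singleton.mem_nhds hx)
      have h2 : ContinuousAt (fun x => s (y0, nrm y0 x)) x :=
        hsc'.continuousAt.comp (continuousAt_const.prodMk h1)
      have h3 : ContinuousAt (fun x => s (y0, nrm y0 x) (τ x)) x := h2.eval hτ.continuousAt
      have h4 : ContinuousAt (fun x => (s (y0, nrm y0 x) (τ x)).1) x :=
        continuous_subtype_val.continuousAt.comp h3
      have h5 : ContinuousAt (fun x : EuclideanSpace ℝ (Fin (n + 1)) => max 1 ‖x‖) x := by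
        fun_prop
      exact h5.smul h4
  · intro x
    have h1 : ‖(s (y0, nrm y0 x) (τ x)).1‖ = 1 := mem_sphere_zero_iff_norm.1 (Subtype.prop _)
    simp only [g]
    rw [norm_smul, h1, mul_one, Real.norm_eq_abs]
    exact (le_max_left _ _).trans (le_abs_self _)
  · intro x hx
    have h1 : τ x = 1 := projIcc_of_right_le _ (by linarith)
    have h0 : x ≠ 0 := norm_pos_iff.1 (by linarith)
    simp only [g, h1, (hse _ (mem_univ _)).2]
    rw [nrm_coe _ _ h0, max_eq_right hx, smul_smul, mul_inv_cancel₀ (by linarith), one_smul]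

theorem exists_section {X Y : Type*} [TopologicalSpace X] [TopologicalSpace Y] [Nonempty X]
    (U : Set Y) (F : Y → I → X)
    (hF : ContinuousOn (fun q : Y × I => F q.1 q.2) (U ×ˢ univ)) :
    ∃ s : Y → C(I, X), ContinuousOn s U ∧ ∀ q ∈ U, ∀ t, s q t = F q t := by
  classical
  have hc : Continuous (fun q : U × I => F q.1.1 q.2) := by
    have := hF.comp_continuous (f := fun q : U × I => ((q.1.1, q.2) : Y × I)) (by fun_prop)
      (fun q => ⟨q.1.2, mem_univ _⟩)
    exact this
  let K : C(U, C(I, X)) := ContinuousMap.curry ⟨_, hc⟩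
  refine ⟨fun y => if h : y ∈ U then K ⟨y, h⟩ else ContinuousMap.const _ (Classical.arbitrary X),
    ?_, ?_⟩
  · rw [continuousOn_iff_continuous_domRestrict]
    convert K.continuous using 1
    ext y : 1
    simp
  · intro q hq t
    simp [hq, K]

theorem act_nrm {G : Type*} [Monoid G]
    (ρ : G →* (EuclideanSpace ℝ (Fin (n + 1)) ≃ₗᵢ[ℝ] EuclideanSpace ℝ (Fin (n + 1))))
    (y0 : ↥(Sph n)) (g : G) (v : EuclideanSpace ℝ (Fin (n + 1))) (hv : v ≠ 0) :
    nrm y0 (ρ g v) = sphereAct ρ g (nrm y0 v) := by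
  apply Subtype.ext
  have h1 : ρ g v ≠ 0 := by simpa using hv
  rw [nrm_coe _ _ h1]
  simp [sphereAct, nrm_coe _ _ hv]

theorem planner {G : Type*} [Monoid G]
    (ρ : G →* (EuclideanSpace ℝ (Fin (n + 1)) ≃ₗᵢ[ℝ] EuclideanSpace ℝ (Fin (n + 1))))
    (y0 : ↥(Sph n)) (U : Set (↥(Sph n) × ↥(Sph n)))
    (hU : ∀ g p, p ∈ U → (sphereAct ρ g p.1, sphereAct ρ g p.2) ∈ U)
    (W : ↥(Sph n) × ↥(Sph n) → I → EuclideanSpace ℝ (Fin (n + 1)))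
    (hW : Continuous (fun q : (↥(Sph n) × ↥(Sph n)) × I => W q.1 q.2))
    (hW0 : ∀ p ∈ U, ∀ t, W p t ≠ 0)
    (h0 : ∀ p, W p 0 = p.1) (h1 : ∀ p, W p 1 = p.2)
    (he : ∀ g p t, W (sphereAct ρ g p.1, sphereAct ρ g p.2) t = ρ g (W p t)) :
    ∃ s : ↥(Sph n) × ↥(Sph n) → C(I, ↥(Sph n)),
        ContinuousOn s U ∧
        (∀ p ∈ U, s p 0 = p.1 ∧ s p 1 = p.2) ∧
        (∀ g p, p ∈ U → ∀ t : I, s (sphereAct ρ g p.1, sphereAct ρ g p.2) t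
          = sphereAct ρ g (s p t)) := by
  have : Nonempty ↥(Sph n) := ⟨y0⟩
  obtain ⟨s, hs, hsF⟩ := exists_section U (fun p t => nrm y0 (W p t))
    ((nrm_continuousOn y0).comp hW.continuousOn (fun q hq => hW0 _ hq.1 _))
  refine ⟨s, hs, fun p hp => ⟨?_, ?_⟩, fun g p hp t => ?_⟩
  · rw [hsF p hp, h0, nrm_self]
  · rw [hsF p hp, h1, nrm_self]
  · rw [hsF p hp, hsF _ (hU g p hp), he, act_nrm ρ y0 g _ (hW0 p hp t)]

theorem comb_ne_zero {E : Type*} [NormedAddCommGroup E] [NormedSpace ℝ E] (x y : E)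
    (hx : ‖x‖ = 1) (hy : ‖y‖ = 1) (hxy : x ≠ -y) (a : ℝ) (ha0 : 0 ≤ a) (ha1 : a ≤ 1) :
    (1 - a) • x + a • y ≠ 0 := by
  intro h
  have h1 : (1 - a) • x = a • (-y) := by
    rw [smul_neg]; exact eq_neg_of_add_eq_zero_left h
  have h2 := congrArg norm h1
  rw [norm_smul, norm_smul, norm_neg, hx, hy, Real.norm_eq_abs, Real.norm_eq_abs,
    abs_of_nonneg ha0, abs_of_nonneg (by linarith)] at h2
  have h3 : 1 - a = a := by linarith
  rw [h3] at h1
  exact hxy (smul_right_injective E (show a ≠ 0 by linarith) h1)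

theorem cover_two {G : Type*} [Monoid G]
    (ρ : G →* (EuclideanSpace ℝ (Fin (n + 1)) ≃ₗᵢ[ℝ] EuclideanSpace ℝ (Fin (n + 1))))
    (B : EuclideanSpace ℝ (Fin (n + 1)) →ₗ[ℝ] EuclideanSpace ℝ (Fin (n + 1)))
    (hB : ∀ g x, B (ρ g x) = ρ g (B x)) (hBo : ∀ x, inner ℝ x (B x) = 0)
    (hB0 : ∀ x, x ≠ 0 → B x ≠ 0) :
    eqTCcover (sphereAct ρ) 2 := by
  obtain ⟨y0⟩ : Nonempty ↥(Sph n) :=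
    ⟨⟨EuclideanSpace.single 0 1, by simp⟩⟩
  have hBc : Continuous B := B.continuous_of_finiteDimensional
  have hn1 : ∀ x : ↥(Sph n), ‖x.1‖ = 1 := fun x => mem_sphere_zero_iff_norm.1 x.2
  have hco : ∀ g (x : ↥(Sph n)), (sphereAct ρ g x).1 = ρ g x.1 := fun _ _ => rfl
  let U1 : Set (↥(Sph n) × ↥(Sph n)) := {p | p.1.1 ≠ -p.2.1}
  let U2 : Set (↥(Sph n) × ↥(Sph n)) := {p | p.1.1 ≠ p.2.1}
  have hU1 : ∀ g p, p ∈ U1 → (sphereAct ρ g p.1, sphereAct ρ g p.2) ∈ U1 := by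
    intro g p hp h
    apply hp
    simp only [hco] at h
    rw [← map_neg] at h
    exact (ρ g).injective h
  have hU2 : ∀ g p, p ∈ U2 → (sphereAct ρ g p.1, sphereAct ρ g p.2) ∈ U2 := by
    intro g p hp h
    apply hp
    simp only [hco] at h
    exact (ρ g).injective h
  have hO1 : IsOpen U1 := isOpen_ne_fun (by fun_prop) (by fun_prop)
  have hO2 : IsOpen U2 := isOpen_ne_fun (by fun_prop) (by fun_prop)
  refine ⟨![U1, U2], ?_, ?_, ?_⟩
  · intro i; fin_cases i
    · exact hO1
    · exact hO2
  · refine eq_univ_of_forall fun p => ?_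
    by_cases h : p ∈ U2
    · exact mem_iUnion.2 ⟨1, h⟩
    · refine mem_iUnion.2 ⟨0, ?_⟩
      change p.1.1 ≠ -p.2.1
      have h' : p.1.1 = p.2.1 := by simpa [U2] using h
      intro h3
      rw [h'] at h3
      have h4 : p.2.1 = 0 := by
        have h5 : (2:ℝ) • p.2.1 = 0 := by
          rw [two_smul]; exact add_eq_zero_iff_eq_neg.2 h3
        exact (smul_eq_zero.1 h5).resolve_left two_ne_zero
      have := hn1 p.2
      rw [h4, norm_zero] at this
      exact zero_ne_one this
  · intro i; fin_cases i
    · refine ⟨hU1, planner ρ y0 U1 hU1 (fun p t => (1 - (t:ℝ)) • p.1.1 + (t:ℝ) • p.2.1)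
        (by fun_prop) ?_ ?_ ?_ ?_⟩
      · intro p hp t
        exact comb_ne_zero _ _ (hn1 _) (hn1 _) hp _ t.2.1 t.2.2
      · intro p; simp
      · intro p; simp
      · intro g p t; simp [hco]
    · refine ⟨hU2, planner ρ y0 U2 hU2 (fun p t =>
        (1 - min 1 (2 * (t:ℝ))) • p.1.1 +
          (min 1 (2 * (t:ℝ)) * Real.cos (Real.pi * max 0 (2 * (t:ℝ) - 1))) • (-p.2.1) +
          Real.sin (Real.pi * max 0 (2 * (t:ℝ) - 1)) • B p.2.1)
        ?_ ?_ ?_ ?_ ?_⟩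
      · fun_prop
      · intro p hp t
        have ht0 := t.2.1
        have ht1 := t.2.2
        rcases le_total (2 * (t:ℝ)) 1 with h | h
        · rw [min_eq_right h, max_eq_left (by linarith)]
          simp only [mul_zero, Real.cos_zero, Real.sin_zero, mul_one, zero_smul, add_zero]
          exact comb_ne_zero _ _ (hn1 _) (by rw [norm_neg]; exact hn1 _)
            (by rw [neg_neg]; exact hp) _ (by linarith) h
        · rw [min_eq_left h, max_eq_right (by linarith)]
          simp only [sub_self, zero_smul, zero_add, one_mul]
          set θ := Real.pi * (2 * (t:ℝ) - 1)
          intro h0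
          have h5 := congrArg (fun z => inner ℝ p.2.1 z) h0
          simp only [inner_add_right, inner_smul_right, inner_neg_right, hBo, inner_zero_right,
            real_inner_self_eq_norm_sq, hn1] at h5
          have hcos : Real.cos θ = 0 := by linarith
          rw [hcos, zero_smul, zero_add] at h0
          have hsin : Real.sin θ ≠ 0 := by
            intro hs
            have := Real.sin_sq_add_cos_sq θ
            rw [hs, hcos] at this; norm_num at this
          refine hB0 p.2.1 ?_ ((smul_eq_zero.1 h0).resolve_left hsin)
          rw [← norm_ne_zero_iff, hn1]; exact one_ne_zero
      · intro p; simp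
      · intro p; norm_num
      · intro g p t; simp [hco, hB]

theorem exists_skew {E : Type*} [NormedAddCommGroup E] [InnerProductSpace ℝ E]
    [FiniteDimensional ℝ E] (W : Submodule ℝ E) (m : ℕ) (hW : Module.finrank ℝ W = m + m) :
    ∃ J : E →ₗ[ℝ] E, (∀ x, J x ∈ W) ∧ (∀ x, inner ℝ x (J x) = 0) ∧
      (∀ x ∈ Wᗮ, J x = 0) ∧ ∀ x ∈ W, J x = 0 → x = 0 := by
  let b : OrthonormalBasis (Fin m ⊕ Fin m) ℝ W :=
    (stdOrthonormalBasis ℝ W).reindex ((finCongr hW).trans finSumFinEquiv.symm)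
  let J : E →ₗ[ℝ] E := ∑ i : Fin m,
    (((innerₛₗ ℝ ((b (Sum.inl i) : W) : E)).smulRight ((b (Sum.inr i) : W) : E)) -
     ((innerₛₗ ℝ ((b (Sum.inr i) : W) : E)).smulRight ((b (Sum.inl i) : W) : E)))
  have hJ : ∀ x, J x = ∑ i : Fin m,
      ((inner ℝ ((b (Sum.inl i) : W) : E) x) • ((b (Sum.inr i) : W) : E) -
       (inner ℝ ((b (Sum.inr i) : W) : E) x) • ((b (Sum.inl i) : W) : E)) := by
    intro x
    simp [J]
  refine ⟨J, ?_, ?_, ?_, ?_⟩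
  · intro x
    rw [hJ]
    exact W.sum_mem fun i _ => W.sub_mem (W.smul_mem _ (Subtype.prop _))
      (W.smul_mem _ (Subtype.prop _))
  · intro x
    rw [hJ, inner_sum]
    refine Finset.sum_eq_zero fun i _ => ?_
    rw [inner_sub_right, inner_smul_right, inner_smul_right, real_inner_comm x,
      real_inner_comm x]
    ring
  · intro x hx
    rw [hJ]
    refine Finset.sum_eq_zero fun i _ => ?_
    rw [(Submodule.mem_orthogonal W x).1 hx _ (Subtype.prop _),
      (Submodule.mem_orthogonal W x).1 hx _ (Subtype.prop _)]
    simp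
  · intro x hx h0
    have hb : ∀ i j, inner ℝ ((b i : W) : E) ((b j : W) : E) = if i = j then (1:ℝ) else 0 := by
      intro i j
      exact orthonormal_iff_ite.1 b.orthonormal i j
    have hz : ∀ i, inner ℝ ((b i : W) : E) x = 0 := by
      rintro (i | i)
      · have := congrArg (fun z => inner ℝ ((b (Sum.inr i) : W) : E) z) h0
        simpa [hJ, inner_sum, inner_sub_right, inner_smul_right, hb] using this
      · have := congrArg (fun z => inner ℝ ((b (Sum.inl i) : W) : E) z) h0
        simpa [hJ, inner_sum, inner_sub_right, inner_smul_right, hb] using this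
    have : (⟨x, hx⟩ : W) = 0 := by
      rw [← b.sum_repr ⟨x, hx⟩]
      refine Finset.sum_eq_zero fun i _ => ?_
      rw [b.repr_apply_apply]
      have : inner ℝ (b i) (⟨x, hx⟩ : W) = 0 := hz i
      rw [this, zero_smul]
    exact congrArg Subtype.val this

theorem exists_B (p : ℕ) (hp : p.Prime) (n k : ℕ)
    (ρ : Multiplicative (ZMod p) →*
      (EuclideanSpace ℝ (Fin (n + 1)) ≃ₗᵢ[ℝ] EuclideanSpace ℝ (Fin (n + 1))))
    (V : Submodule ℝ (EuclideanSpace ℝ (Fin (n + 1))))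
    (hV : Module.finrank ℝ V = k + 1)
    (hVfix : ∀ g : Multiplicative (ZMod p), ∀ v ∈ V, ρ g v = v)
    (hfixV : ∀ x : ↥(Sph n),
      (∀ g : Multiplicative (ZMod p), sphereAct ρ g x = x) ↔
        (x : EuclideanSpace ℝ (Fin (n + 1))) ∈ V)
    (hnodd : Odd n) (hkodd : Odd k) :
    ∃ B : EuclideanSpace ℝ (Fin (n + 1)) →ₗ[ℝ] EuclideanSpace ℝ (Fin (n + 1)),
      (∀ g x, B (ρ g x) = ρ g (B x)) ∧ (∀ x, inner ℝ x (B x) = 0) ∧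
      (∀ x, x ≠ 0 → B x ≠ 0) := by
  -- fixed vectors lie in V
  have hfix : ∀ x, (∀ g, ρ g x = x) → x ∈ V := by
    intro x hx
    by_cases h0 : x = 0
    · rw [h0]; exact V.zero_mem
    obtain ⟨y0⟩ : Nonempty ↥(Sph n) := ⟨⟨EuclideanSpace.single 0 1, by simp⟩⟩
    have h1 := (hfixV (nrm y0 x)).1 (fun g => by rw [← act_nrm ρ y0 g x h0, hx])
    rw [nrm_coe _ _ h0] at h1
    exact (V.smul_mem_iff (inv_ne_zero (norm_ne_zero_iff.2 h0))).1 h1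
  have hperp : ∀ g, ∀ x ∈ Vᗮ, ρ g x ∈ Vᗮ := by
    intro g x hx
    rw [Submodule.mem_orthogonal] at hx ⊢
    intro v hv
    rw [← hVfix g v hv, (ρ g).inner_map_map]
    exact hx v hv
  have hdec : ∀ x, ∃ v ∈ V, ∃ w ∈ Vᗮ, x = v + w := by
    intro x
    have := (V.isCompl_orthogonal).sup_eq_top
    have hx : x ∈ V ⊔ Vᗮ := by rw [this]; trivial
    obtain ⟨v, hv, w, hw, h⟩ := Submodule.mem_sup.1 hx
    exact ⟨v, hv, w, hw, h.symm⟩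
  have hdisj : ∀ x, x ∈ V → x ∈ Vᗮ → x = 0 := by
    intro x h1 h2
    have := (Submodule.mem_orthogonal V x).1 h2 x h1
    exact inner_self_eq_zero.1 this
  have hmul : ∀ g h x, ρ (g * h) x = ρ g (ρ h x) := by
    intro g h x; rw [map_mul]; rfl
  have hone : ∀ x, ρ 1 x = x := by
    intro x; rw [map_one]; rfl
  obtain ⟨mk, hmk⟩ := hkodd
  obtain ⟨mn, hmn⟩ := hnodd
  obtain ⟨J, hJW, hJo, hJp, hJ0⟩ := exists_skew V (mk + 1) (by omega)
  have hJe : ∀ g x, J (ρ g x) = ρ g (J x) := by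
    intro g x
    rw [hVfix g _ (hJW x)]
    obtain ⟨v, hv, w, hw, rfl⟩ := hdec x
    rw [map_add, map_add, map_add, hJp _ (hperp g w hw), hJp w hw, hVfix g v hv]
  -- it suffices to have a partner on the orthogonal complement
  suffices hS : ∃ K : EuclideanSpace ℝ (Fin (n + 1)) →ₗ[ℝ] EuclideanSpace ℝ (Fin (n + 1)),
      (∀ g x, K (ρ g x) = ρ g (K x)) ∧ (∀ x, inner ℝ x (K x) = 0) ∧ (∀ x ∈ V, K x = 0) ∧
      (∀ x ∈ Vᗮ, K x ∈ Vᗮ) ∧ (∀ x ∈ Vᗮ, K x = 0 → x = 0) by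
    obtain ⟨K, hKe, hKo, hKV, hKp, hK0⟩ := hS
    refine ⟨J + K, ?_, ?_, ?_⟩
    · intro g x; simp [hJe, hKe]
    · intro x; simp [inner_add_right, hJo, hKo]
    · intro x hx h0
      obtain ⟨v, hv, w, hw, rfl⟩ := hdec x
      have h1 : J v + K w = 0 := by
        simpa [hJp w hw, hKV v hv] using h0
      have h2 : J v = -K w := eq_neg_of_add_eq_zero_left h1
      have h3 : J v = 0 := hdisj _ (hJW v) (by rw [h2]; exact Vᗮ.neg_mem (hKp w hw))
      have h4 : K w = 0 := by simpa [h3] using h1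
      exact hx (by rw [hJ0 v hv h3, hK0 w hw h4, add_zero])
  rcases hp.eq_two_or_odd' with rfl | hodd
  · have hfr : Module.finrank ℝ Vᗮ = (mn - mk) + (mn - mk) := by
      have := V.finrank_add_finrank_orthogonal
      rw [finrank_euclideanSpace_fin] at this
      omega
    obtain ⟨K, hKW, hKo, hKp, hK0⟩ := exists_skew Vᗮ (mn - mk) hfr
    have hKV : ∀ x ∈ V, K x = 0 := fun x hx => hKp x (by rwa [Submodule.orthogonal_orthogonal])
    have hsq : ∀ g : Multiplicative (ZMod 2), g * g = 1 := by decide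
    have hcases : ∀ g h : Multiplicative (ZMod 2), h = 1 ∨ g = 1 ∨ g = h := by decide
    have hneg : ∀ g : Multiplicative (ZMod 2), g ≠ 1 → ∀ w ∈ Vᗮ, ρ g w = -w := by
      intro g hg w hw
      have h1 : w + ρ g w ∈ V := by
        apply hfix
        intro h
        rcases hcases g h with rfl | h1 | rfl
        · exact hone _
        · exact absurd h1 hg
        · rw [map_add, ← hmul, hsq, hone]; exact add_comm _ _
      have h2 := hdisj _ h1 (Vᗮ.add_mem hw (hperp g w hw))
      exact eq_neg_of_add_eq_zero_right h2
    refine ⟨K, ?_, hKo, hKV, fun x _ => hKW x, hK0⟩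
    intro g x
    by_cases hg : g = 1
    · rw [hg, hone, hone]
    · obtain ⟨v, hv, w, hw, rfl⟩ := hdec x
      rw [map_add, map_add, map_add, hVfix g v hv, hKV v hv, hneg g hg w hw,
        zero_add, zero_add, hneg g hg _ (hKW _), map_neg]
  · let g0 : Multiplicative (ZMod p) := Multiplicative.ofAdd 1
    have hcyc : ∀ g : Multiplicative (ZMod p), ∃ j : ℕ, g = (g0 * g0) ^ j := by
      intro g
      obtain ⟨c, hc⟩ := hodd
      haveI : NeZero p := ⟨hp.ne_zero⟩
      refine ⟨(c + 1) * (Multiplicative.toAdd g).val, ?_⟩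
      apply Multiplicative.toAdd.injective
      simp only [g0, toAdd_pow, toAdd_mul, toAdd_ofAdd, nsmul_eq_mul]
      push_cast
      rw [ZMod.natCast_zmod_val]
      have h0 : (2 * (c:ZMod p) + 1) = 0 := by
        have := ZMod.natCast_self p
        rw [hc] at this
        rw [hc]
        push_cast at this
        exact this
      linear_combination (-(Multiplicative.toAdd g)) * h0
    let K : EuclideanSpace ℝ (Fin (n + 1)) →ₗ[ℝ] EuclideanSpace ℝ (Fin (n + 1)) :=
      ((ρ g0).toLinearEquiv : EuclideanSpace ℝ (Fin (n + 1)) →ₗ[ℝ] _) -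
      ((ρ g0⁻¹).toLinearEquiv : EuclideanSpace ℝ (Fin (n + 1)) →ₗ[ℝ] _)
    have hK : ∀ x, K x = ρ g0 x - ρ g0⁻¹ x := fun x => rfl
    refine ⟨K, ?_, ?_, ?_, ?_, ?_⟩
    · intro g x
      rw [hK, hK, map_sub, ← hmul, ← hmul, ← hmul, ← hmul, mul_comm g, mul_comm g]
    · intro x
      rw [hK, inner_sub_right, sub_eq_zero, ← (ρ g0).inner_map_map x (ρ g0⁻¹ x), ← hmul,
        mul_inv_cancel, hone, real_inner_comm]
    · intro x hx
      rw [hK, hVfix _ x hx, hVfix _ x hx, sub_self]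
    · intro x hx
      exact Vᗮ.sub_mem (hperp _ x hx) (hperp _ x hx)
    · intro x hx h0
      have h1 : ρ (g0 * g0) x = x := by
        rw [hmul, sub_eq_zero.1 ((hK x).symm.trans h0), ← hmul, mul_inv_cancel, hone]
      have h2 : ∀ j : ℕ, ρ ((g0 * g0) ^ j) x = x := by
        intro j
        induction j with
        | zero => rw [pow_zero, hone]
        | succ j ih => rw [pow_succ, hmul, h1, ih]
      refine hdisj x (hfix x fun g => ?_) hx
      obtain ⟨j, rfl⟩ := hcyc g
      exact h2 j

end PaperTC

open PaperTC

/-- Let `ℤ/p` (`p` prime) act linearly on `S^n` with fixed point set the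
great `k`-sphere cut out by a pointwise-fixed subspace `V` of dimension `k + 1`, where
`0 < k < n`.  If both `n` and `k` are odd, then `TC_{ℤ/p}(S^n) = 2`. -/
theorem eqTC_linear_zmod_sphere_eq_two (p : ℕ) (hp : p.Prime) (n k : ℕ)
    (hk : 0 < k) (hkn : k < n)
    (ρ : Multiplicative (ZMod p) →*
      (EuclideanSpace ℝ (Fin (n + 1)) ≃ₗᵢ[ℝ] EuclideanSpace ℝ (Fin (n + 1))))
    (V : Submodule ℝ (EuclideanSpace ℝ (Fin (n + 1))))
    (hV : Module.finrank ℝ V = k + 1)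
    (hVfix : ∀ g : Multiplicative (ZMod p), ∀ v ∈ V, ρ g v = v)
    (hfixV : ∀ x : ↥(Sph n),
      (∀ g : Multiplicative (ZMod p), sphereAct ρ g x = x) ↔
        (x : EuclideanSpace ℝ (Fin (n + 1))) ∈ V)
    (hnodd : Odd n) (hkodd : Odd k) :
    eqTC (sphereAct ρ) = 2 := by
  obtain ⟨B, hB, hBo, hB0⟩ := exists_B p hp n k ρ V hV hVfix hfixV hnodd hkodd
  have h2 := cover_two ρ B hB hBo hB0
  have h1 := not_cover_one ρ
  refine le_antisymm (sInf_le ⟨2, rfl, one_le_two, h2⟩) (le_sInf ?_)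
  rintro _ ⟨m, rfl, hm, hP⟩
  have : 2 ≤ m := by
    by_contra hlt
    have : m = 1 := by omega
    subst this
    exact h1 hP
  exact_mod_cast this
end

section
/- Let p be a prime and let ℤ/p act linearly on S^n via an orthogonal representation ρ : ℤ/p → O(n+1) with fixed point set the great k-sphere S^k, where 0 < k < n. If n is even or k is even, then TC_{ℤ/p}(S^n) = 3. -/
open Set unitInterval

open PaperTC

namespace TCS
open MeasureTheory Set Filter Topology

/-- Lagrange weights extracting the top coefficient of `t ↦ det (1 + t A)`. -/
theorem exists_weights (W : Type*) [NormedAddCommGroup W] [NormedSpace ℝ W]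
    [FiniteDimensional ℝ W] [Nontrivial W] (δ : ℝ) (hδ : 0 < δ) :
    ∃ (s : Finset ℕ) (t w : ℕ → ℝ), (∀ i ∈ s, 0 < t i ∧ t i < δ) ∧
      (∑ i ∈ s, w i = 0) ∧
      ∀ A : W →L[ℝ] W, A.det = ∑ i ∈ s, w i * (1 + t i • A : W →L[ℝ] W).det := by
  classical
  set N := Module.finrank ℝ W with hN
  have hNpos : 0 < N := Module.finrank_pos
  let v : ℕ → ℝ := fun i => δ / (i + 2)
  have hv : Function.Injective v := by
    intro i j hij
    simp only [v] at hij
    have hi : (0:ℝ) < (i:ℝ) + 2 := by positivity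
    have hj : (0:ℝ) < (j:ℝ) + 2 := by positivity
    rw [div_eq_div_iff hi.ne' hj.ne'] at hij
    have := mul_left_cancel₀ hδ.ne' hij
    have h2 : (j:ℝ) = i := by linarith
    exact_mod_cast h2.symm
  let s := Finset.range (N + 1)
  have key : ∀ P : Polynomial ℝ, P.natDegree ≤ N →
      P.coeff N = ∑ i ∈ s, (1 / ∏ j ∈ s.erase i, (v i - v j)) * P.eval (v i) := by
    intro P hP
    have := Lagrange.coeff_eq_sum (s := s) (v := v) (hv.injOn) (P := P) (by
      refine lt_of_le_of_lt Polynomial.degree_le_natDegree ?_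
      simp only [s, Finset.card_range]
      exact_mod_cast Nat.lt_succ_of_le hP)
    simp only [s, Finset.card_range, Nat.add_sub_cancel] at this
    rw [this]
    refine Finset.sum_congr rfl fun i _ => ?_
    ring
  refine ⟨s, v, fun i => 1 / ∏ j ∈ s.erase i, (v i - v j), ?_, ?_, ?_⟩
  · intro i _
    simp only [v]
    refine ⟨by positivity, ?_⟩
    rw [div_lt_iff₀ (by positivity)]
    nlinarith [(Nat.cast_nonneg i : (0:ℝ) ≤ i)]
  · have := key 1 (by simp)
    simp only [Polynomial.eval_one, mul_one] at this
    rw [← this, Polynomial.coeff_one, if_neg hNpos.ne']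
  · intro A
    let b := Module.finBasis ℝ W
    let M := LinearMap.toMatrix b b (A : W →ₗ[ℝ] W)
    have h1 := Polynomial.natDegree_det_X_add_C_le M 1
    have h2 := Polynomial.coeff_det_X_add_C_card M 1
    rw [Fintype.card_fin] at h1 h2
    have h3 := key _ h1
    replace h3 := h2.symm.trans h3
    have h4 : A.det = M.det := by
      simp only [M, ContinuousLinearMap.det, LinearMap.det_toMatrix]
    rw [h4, h3]
    refine Finset.sum_congr rfl fun i _ => ?_
    congr 1
    have h5 : (1 + v i • A : W →L[ℝ] W).det = (1 + v i • M).det := by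
      simp only [M, ContinuousLinearMap.det]
      rw [← LinearMap.det_toMatrix b]
      congr 1
      rw [← LinearMap.toMatrix_one b, ← map_smul, ← map_add]
      rfl
    rw [h5, ← Polynomial.coe_evalRingHom, RingHom.map_det]
    congr 1
    ext a c
    simp only [RingHom.mapMatrix_apply, Matrix.map_apply, Matrix.add_apply, Matrix.smul_apply,
      smul_eq_mul, map_add, Polynomial.eval_mul, Polynomial.coe_evalRingHom, Polynomial.eval_X,
      Polynomial.eval_C]
    ring

theorem integral_det_fderiv_eq_zero {W : Type*} [NormedAddCommGroup W] [NormedSpace ℝ W]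
    [FiniteDimensional ℝ W] [Nontrivial W] [MeasurableSpace W] [BorelSpace W]
    (μ : Measure W) [μ.IsAddHaarMeasure] (h : W → W) (hc : ContDiff ℝ 1 h)
    (hs : HasCompactSupport h) : ∫ x, (fderiv ℝ h x).det ∂μ = 0 := by
  obtain ⟨C, hC⟩ := hc.lipschitzWith_of_hasCompactSupport hs one_ne_zero
  have hcd : Continuous (fderiv ℝ h) := hc.continuous_fderiv one_ne_zero
  -- positivity of the determinant near one
  have hdet1 : (1 : W →L[ℝ] W).det = 1 := by
    simp [ContinuousLinearMap.det]
  obtain ⟨ε, hε, hpos⟩ : ∃ ε > 0, ∀ A : W →L[ℝ] W, ‖A‖ < ε → 0 < (1 + A).det := by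
    have hct : Continuous fun A : W →L[ℝ] W => (1 + A).det :=
      ContinuousLinearMap.continuous_det.comp (continuous_const.add continuous_id)
    have h0 : (0:ℝ) < (fun A : W →L[ℝ] W => (1 + A).det) 0 := by
      simp [hdet1]
    have := hct.continuousAt.eventually (lt_mem_nhds h0)
    obtain ⟨ε, hε, H⟩ := Metric.eventually_nhds_iff.1 this
    exact ⟨ε, hε, fun A hA => H (by simpa using hA)⟩
  obtain ⟨C', hC'⟩ := (hs.fderiv ℝ).exists_bound_of_continuous hcd
  have hC'0 : 0 ≤ C' := (norm_nonneg _).trans (hC' 0)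
  let δ : ℝ := min (1 / (C + 1)) (ε / (C' + 1))
  have hδ : 0 < δ := by
    refine lt_min (by positivity) (by positivity)
  obtain ⟨s, t, w, ht, hw, hA⟩ := exists_weights W δ hδ
  let S := tsupport h
  have hSc : IsCompact S := hs
  have hSm : MeasurableSet S := (isClosed_tsupport h).measurableSet
  have hout : ∀ x, x ∉ S → h x = 0 := fun x hx => image_eq_zero_of_notMem_tsupport hx
  have hvol : ∀ τ : ℝ, 0 < τ → τ < δ →
      ∫ x in S, (1 + τ • fderiv ℝ h x : W →L[ℝ] W).det ∂μ = μ.real S := by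
    intro τ h0 hτ
    let g : W → W := fun x => x + τ • h x
    have hg' : ∀ x, HasFDerivAt g (1 + τ • fderiv ℝ h x : W →L[ℝ] W) x := fun x =>
      (hasFDerivAt_id x).add (((hc.differentiable one_ne_zero) x).hasFDerivAt.const_smul τ)
    have happ : ApproximatesLinearOn g
        ((ContinuousLinearEquiv.refl ℝ W : W ≃L[ℝ] W) : W →L[ℝ] W) univ (Real.toNNReal τ * C) := by
      intro x _ y _
      have : g x - g y - ((ContinuousLinearEquiv.refl ℝ W : W ≃L[ℝ] W) : W →L[ℝ] W) (x - y)
          = τ • (h x - h y) := by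
        simp only [g, smul_sub, ContinuousLinearEquiv.coe_refl, ContinuousLinearMap.coe_id', id]
        abel
      rw [this, norm_smul, Real.norm_of_nonneg h0.le]
      have := hC.dist_le_mul x y
      rw [dist_eq_norm, dist_eq_norm] at this
      calc τ * ‖h x - h y‖ ≤ τ * (C * ‖x - y‖) := by gcongr
        _ = _ := by rw [NNReal.coe_mul, Real.coe_toNNReal _ h0.le, mul_assoc]
    have hlt : (Real.toNNReal τ * C : NNReal) <
        ‖((ContinuousLinearEquiv.refl ℝ W).symm : W →L[ℝ] W)‖₊⁻¹ := by
      have h1 : ‖((ContinuousLinearEquiv.refl ℝ W).symm : W →L[ℝ] W)‖₊ = 1 := by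
        ext
        exact ContinuousLinearMap.norm_id
      rw [h1, inv_one, ← NNReal.coe_lt_coe]
      rw [NNReal.coe_mul, Real.coe_toNNReal _ h0.le, NNReal.coe_one]
      have h2 : τ < 1 / (C + 1) := hτ.trans_le (min_le_left _ _)
      rw [lt_div_iff₀ (by positivity)] at h2
      nlinarith
    have hinj : Function.Injective g := by
      have := happ.injOn (Or.inr hlt)
      exact Set.injOn_univ.1 this
    have hsurj : Function.Surjective g := happ.surjective (Or.inr hlt)
    have himg : g '' S = S := by
      have hc1 : g '' Sᶜ = Sᶜ := by
        have : EqOn g id Sᶜ := fun x hx => by simp [g, hout x hx]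
        rw [this.image_eq, image_id]
      have := image_compl_eq (f := g) ⟨hinj, hsurj⟩ (s := S)
      rw [hc1] at this
      exact (compl_injective this).symm
    have hcv := integral_image_eq_integral_abs_det_fderiv_smul μ hSm
      (fun x _ => (hg' x).hasFDerivWithinAt) hinj.injOn (fun _ => (1:ℝ))
    rw [himg] at hcv
    simp only [integral_const, smul_eq_mul, mul_one, measureReal_restrict_apply_univ] at hcv
    rw [hcv]
    refine integral_congr_ae (Eventually.of_forall fun x => ?_)
    symm
    refine abs_of_pos (hpos _ ?_)
    rw [norm_smul, Real.norm_of_nonneg h0.le]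
    have h2 : τ < ε / (C' + 1) := hτ.trans_le (min_le_right _ _)
    rw [lt_div_iff₀ (by positivity)] at h2
    nlinarith [hC' x, norm_nonneg (fderiv ℝ h x)]
  have h1 : ∫ x, (fderiv ℝ h x).det ∂μ = ∫ x in S, (fderiv ℝ h x).det ∂μ := by
    symm
    refine setIntegral_eq_integral_of_forall_compl_eq_zero fun x hx => ?_
    have : fderiv ℝ h x = 0 := by
      by_contra hne
      exact hx (support_fderiv_subset ℝ hne)
    rw [this]
    simp only [ContinuousLinearMap.det]
    exact LinearMap.det_zero'' |>.trans (by simp)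
  rw [h1, integral_congr_ae (Eventually.of_forall fun x => hA (fderiv ℝ h x))]
  rw [integral_finsetSum]
  · simp_rw [integral_const_mul]
    rw [Finset.sum_congr rfl fun i hi => by rw [hvol _ (ht i hi).1 (ht i hi).2],
      ← Finset.sum_mul, hw, zero_mul]
  · intro i _
    refine Integrable.const_mul ?_ _
    refine ContinuousOn.integrableOn_compact hSc (Continuous.continuousOn ?_)
    exact ContinuousLinearMap.continuous_det.comp
      (continuous_const.add (hcd.const_smul (t i)))

end TCS

set_option linter.unusedSectionVars false
namespace TCS
open MeasureTheory Set Filter Topology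

/-- Cutoff functions. -/
noncomputable def cb (r : ℝ) : ℝ := Real.smoothTransition (r - 4)
noncomputable def cl (r : ℝ) : ℝ := Real.smoothTransition (r - 2)
noncomputable def cd (r : ℝ) : ℝ := Real.smoothTransition (9 - r)
noncomputable def ct (r : ℝ) : ℝ := Real.smoothTransition (r - 6)
noncomputable def ce (r : ℝ) : ℝ := Real.smoothTransition (11 - r)
noncomputable def cf (r : ℝ) : ℝ := Real.smoothTransition (13 - r)

theorem cb0 {r : ℝ} (h : r ≤ 4) : cb r = 0 := Real.smoothTransition.zero_of_nonpos (by linarith)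
theorem cb1 {r : ℝ} (h : 5 ≤ r) : cb r = 1 := Real.smoothTransition.one_of_one_le (by linarith)
theorem cl0 {r : ℝ} (h : r ≤ 2) : cl r = 0 := Real.smoothTransition.zero_of_nonpos (by linarith)
theorem cl1 {r : ℝ} (h : 3 ≤ r) : cl r = 1 := Real.smoothTransition.one_of_one_le (by linarith)
theorem cd0 {r : ℝ} (h : 9 ≤ r) : cd r = 0 := Real.smoothTransition.zero_of_nonpos (by linarith)
theorem cd1 {r : ℝ} (h : r ≤ 8) : cd r = 1 := Real.smoothTransition.one_of_one_le (by linarith)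
theorem ct0 {r : ℝ} (h : r ≤ 6) : ct r = 0 := Real.smoothTransition.zero_of_nonpos (by linarith)
theorem ct1 {r : ℝ} (h : 7 ≤ r) : ct r = 1 := Real.smoothTransition.one_of_one_le (by linarith)
theorem ce0 {r : ℝ} (h : 11 ≤ r) : ce r = 0 := Real.smoothTransition.zero_of_nonpos (by linarith)
theorem ce1 {r : ℝ} (h : r ≤ 10) : ce r = 1 := Real.smoothTransition.one_of_one_le (by linarith)
theorem cf0 {r : ℝ} (h : 13 ≤ r) : cf r = 0 := Real.smoothTransition.zero_of_nonpos (by linarith)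
theorem cf1 {r : ℝ} (h : r ≤ 12) : cf r = 1 := Real.smoothTransition.one_of_one_le (by linarith)

theorem sT_contDiff : ContDiff ℝ 1 Real.smoothTransition :=
  Real.smoothTransition.contDiff (n := 1)
theorem cb_cd : ContDiff ℝ 1 cb := sT_contDiff.comp (contDiff_id.sub contDiff_const)
theorem cl_cd : ContDiff ℝ 1 cl := sT_contDiff.comp (contDiff_id.sub contDiff_const)
theorem cd_cd : ContDiff ℝ 1 cd := sT_contDiff.comp (contDiff_const.sub contDiff_id)
theorem ct_cd : ContDiff ℝ 1 ct := sT_contDiff.comp (contDiff_id.sub contDiff_const)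
theorem ce_cd : ContDiff ℝ 1 ce := sT_contDiff.comp (contDiff_const.sub contDiff_id)
theorem cf_cd : ContDiff ℝ 1 cf := sT_contDiff.comp (contDiff_const.sub contDiff_id)

section
variable {E : Type*} [NormedAddCommGroup E] [InnerProductSpace ℝ E]

/-- Region where the maps are required to be smooth. -/
def OO (E : Type*) [NormedAddCommGroup E] : Set (E × E) := {p | 1 < ‖p.1‖ ∧ 1 < ‖p.2‖}

theorem isOpen_OO : IsOpen (OO E) :=
  (isOpen_lt continuous_const continuous_fst.norm).inter
    (isOpen_lt continuous_const continuous_snd.norm)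

theorem ev1g {p : E × E} {a : ℝ} (h : a < ‖p.1‖) : ∀ᶠ q in 𝓝 p, a < ‖q.1‖ :=
  continuous_fst.norm.continuousAt.eventually (lt_mem_nhds h)
theorem ev1l {p : E × E} {a : ℝ} (h : ‖p.1‖ < a) : ∀ᶠ q in 𝓝 p, ‖q.1‖ < a :=
  continuous_fst.norm.continuousAt.eventually (gt_mem_nhds h)
theorem ev2g {p : E × E} {a : ℝ} (h : a < ‖p.2‖) : ∀ᶠ q in 𝓝 p, a < ‖q.2‖ :=
  continuous_snd.norm.continuousAt.eventually (lt_mem_nhds h)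
theorem ev2l {p : E × E} {a : ℝ} (h : ‖p.2‖ < a) : ∀ᶠ q in 𝓝 p, ‖q.2‖ < a :=
  continuous_snd.norm.continuousAt.eventually (gt_mem_nhds h)

theorem norm_contDiffAt {p : E × E} (hp : p ∈ OO E) :
    ContDiffAt ℝ 1 (fun q : E × E => (‖q.1‖, ‖q.2‖)) p := by
  have h1 : p.1 ≠ 0 := fun h => by have := hp.1; rw [h, norm_zero] at this; linarith
  have h2 : p.2 ≠ 0 := fun h => by have := hp.2; rw [h, norm_zero] at this; linarith
  exact (contDiffAt_fst.norm ℝ h1).prodMk (contDiffAt_snd.norm ℝ h2)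

theorem contDiff_cut (A : ℝ × ℝ → ℝ) (hA : ContDiff ℝ 1 A)
    (h0 : ∀ r s, r ≤ 2 ∨ s ≤ 2 → A (r, s) = 0) (z : E × E → E)
    (hz : ContDiffOn ℝ 1 z (OO E)) :
    ContDiff ℝ 1 (fun p : E × E => A (‖p.1‖, ‖p.2‖) • z p) := by
  rw [contDiff_iff_contDiffAt]
  intro p
  by_cases hp : p ∈ OO E
  · exact (hA.contDiffAt.comp p (norm_contDiffAt hp)).smul
      (hz.contDiffAt (isOpen_OO.mem_nhds hp))
  · have : (fun p : E × E => A (‖p.1‖, ‖p.2‖) • z p) =ᶠ[𝓝 p] fun _ => (0 : E) := by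
      simp only [OO, mem_ofPred_eq, not_and_or, not_lt] at hp
      rcases hp with hp | hp
      · filter_upwards [ev1l (show ‖p.1‖ < 2 by linarith)] with q hq
        rw [h0 _ _ (Or.inl hq.le), zero_smul]
      · filter_upwards [ev2l (show ‖p.2‖ < 2 by linarith)] with q hq
        rw [h0 _ _ (Or.inr hq.le), zero_smul]
    exact contDiffAt_const.congr_of_eventuallyEq this

theorem det_eq_zero_of_norm [FiniteDimensional ℝ E] [Nontrivial E] (L : E × E →L[ℝ] E)
    (hL : Function.Surjective L) (F : E × E → E × E) (p : E × E) (c : ℝ)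
    (h : ∀ᶠ q in 𝓝 p, ‖L (F q)‖ = c) : (fderiv ℝ F p).det = 0 := by
  by_cases hd : DifferentiableAt ℝ F p
  · have hLF : HasFDerivAt (fun q => L (F q)) (L.comp (fderiv ℝ F p)) p :=
      L.hasFDerivAt.comp p hd.hasFDerivAt
    obtain ⟨u, hu, hort⟩ : ∃ u : E, u ≠ 0 ∧ ∀ v, inner ℝ u (L (fderiv ℝ F p v)) = 0 := by
      by_cases hc : c = 0
      · obtain ⟨u, hu⟩ := exists_ne (0 : E)
        refine ⟨u, hu, fun v => ?_⟩
        have h0 : (fun q => L (F q)) =ᶠ[𝓝 p] fun _ => (0 : E) := by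
          filter_upwards [h] with q hq
          rw [hc] at hq
          exact norm_eq_zero.1 hq
        have h1 : HasFDerivAt (fun q => L (F q)) (0 : E × E →L[ℝ] E) p :=
          (hasFDerivAt_const (0:E) p).congr_of_eventuallyEq h0
        have := congrArg (fun A => A v) (hLF.unique h1)
        simp only [ContinuousLinearMap.comp_apply, ContinuousLinearMap.zero_apply] at this
        rw [this, inner_zero_right]
      · refine ⟨L (F p), ?_, fun v => ?_⟩
        · intro h0
          have := h.self_of_nhds
          rw [h0, norm_zero] at this
          exact hc this.symm
        · have h0 : (fun q => ‖L (F q)‖ ^ 2) =ᶠ[𝓝 p] fun _ => c ^ 2 := by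
            filter_upwards [h] with q hq
            rw [hq]
          have h1 := hLF.norm_sq
          have h2 : HasFDerivAt (fun q => ‖L (F q)‖ ^ 2) (0 : E × E →L[ℝ] ℝ) p :=
            (hasFDerivAt_const (c ^ 2) p).congr_of_eventuallyEq h0
          have := congrArg (fun A => A v) (h1.unique h2)
          simpa using this
    by_contra hne
    have hsurj : Function.Surjective (fderiv ℝ F p) := by
      have hu' : IsUnit (LinearMap.det (fderiv ℝ F p : E × E →ₗ[ℝ] E × E)) :=
        isUnit_iff_ne_zero.2 hne
      exact (LinearEquiv.ofIsUnitDet (v := Module.finBasis ℝ (E × E))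
        (v' := Module.finBasis ℝ (E × E)) (f := (fderiv ℝ F p : E × E →ₗ[ℝ] E × E))
        (by rwa [LinearMap.det_toMatrix])).surjective
    obtain ⟨x, hx⟩ := hL u
    obtain ⟨v, hv⟩ := hsurj x
    have := hort v
    rw [hv, hx, inner_self_eq_zero] at this
    exact hu this
  · rw [fderiv_zero_of_not_differentiableAt hd]
    exact LinearMap.det_zero'' |>.trans (by simp)

theorem det_fst [FiniteDimensional ℝ E] [Nontrivial E] (F : E × E → E × E) (p : E × E) (c : ℝ)
    (h : ∀ᶠ q in 𝓝 p, ‖(F q).1‖ = c) : (fderiv ℝ F p).det = 0 :=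
  det_eq_zero_of_norm (ContinuousLinearMap.fst ℝ E E) Prod.fst_surjective F p c h
theorem det_snd [FiniteDimensional ℝ E] [Nontrivial E] (F : E × E → E × E) (p : E × E) (c : ℝ)
    (h : ∀ᶠ q in 𝓝 p, ‖(F q).2‖ = c) : (fderiv ℝ F p).det = 0 :=
  det_eq_zero_of_norm (ContinuousLinearMap.snd ℝ E E) Prod.snd_surjective F p c h

/-- Admissible maps. -/
def Adm (z : E × E → E) : Prop := ContDiffOn ℝ 1 z (OO E) ∧ ∀ p ∈ OO E, ‖z p‖ = 1

noncomputable def base (z w : E × E → E) (p : E × E) : E × E :=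
  ((cb ‖p.1‖ * cl ‖p.2‖) • z p, (cl ‖p.1‖ * cb ‖p.2‖) • w p)

noncomputable def full (N : ℝ × (E × E) → E) (w : E × E → E) (p : E × E) : E × E :=
  ((cb ‖p.1‖ * cd ‖p.1‖ * cl ‖p.2‖ * ce ‖p.2‖) • N (ct ‖p.1‖, p),
    (cl ‖p.1‖ * ce ‖p.1‖ * cb ‖p.2‖ * cf ‖p.2‖) • w p)

theorem base_contDiff {z w : E × E → E} (hz : Adm z) (hw : Adm w) :
    ContDiff ℝ 1 (base z w) := by
  refine ContDiff.prodMk ?_ ?_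
  · refine contDiff_cut (fun x => cb x.1 * cl x.2) ?_ ?_ z hz.1
    · exact (cb_cd.comp contDiff_fst).mul (cl_cd.comp contDiff_snd)
    · rintro r s (h | h)
      · simp [cb0 (show r ≤ 4 by linarith)]
      · simp [cl0 h]
  · refine contDiff_cut (fun x => cl x.1 * cb x.2) ?_ ?_ w hw.1
    · exact (cl_cd.comp contDiff_fst).mul (cb_cd.comp contDiff_snd)
    · rintro r s (h | h)
      · simp [cl0 h]
      · simp [cb0 (show s ≤ 4 by linarith)]

/-- Admissible homotopies. -/
def AdmH (N : ℝ × (E × E) → E) : Prop :=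
  ContDiffOn ℝ 1 N (univ ×ˢ OO E) ∧ ∀ t, ∀ p ∈ OO E, ‖N (t, p)‖ = 1

theorem AdmH.adm {N : ℝ × (E × E) → E} (h : AdmH N) (t : ℝ) : Adm fun p => N (t, p) := by
  refine ⟨h.1.comp (contDiff_const.prodMk contDiff_id).contDiffOn ?_, h.2 t⟩
  intro p hp
  exact ⟨mem_univ _, hp⟩

theorem full_contDiff {N : ℝ × (E × E) → E} {w : E × E → E} (hN : AdmH N) (hw : Adm w) :
    ContDiff ℝ 1 (full N w) := by
  refine ContDiff.prodMk ?_ ?_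
  · refine contDiff_cut (fun x => cb x.1 * cd x.1 * cl x.2 * ce x.2) ?_ ?_
      (fun p => N (ct ‖p.1‖, p)) ?_
    · exact (((cb_cd.comp contDiff_fst).mul (cd_cd.comp contDiff_fst)).mul
        (cl_cd.comp contDiff_snd)).mul (ce_cd.comp contDiff_snd)
    · rintro r s (h | h)
      · simp [cb0 (show r ≤ 4 by linarith)]
      · simp [cl0 h]
    · refine hN.1.comp (ContDiffOn.prodMk ?_ contDiffOn_id) ?_
      · intro p hp
        exact ((ct_cd.comp contDiff_fst).contDiffAt.comp p (norm_contDiffAt hp)).contDiffWithinAt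
      · intro p hp
        exact ⟨mem_univ _, hp⟩
  · refine contDiff_cut (fun x => cl x.1 * ce x.1 * cb x.2 * cf x.2) ?_ ?_ w hw.1
    · exact (((cl_cd.comp contDiff_fst).mul (ce_cd.comp contDiff_fst)).mul
        (cb_cd.comp contDiff_snd)).mul (cf_cd.comp contDiff_snd)
    · rintro r s (h | h)
      · simp [cl0 h]
      · simp [cb0 (show s ≤ 4 by linarith)]

theorem prod_bound_isCompact [FiniteDimensional ℝ E] (R : ℝ) :
    IsCompact {p : E × E | ‖p.1‖ ≤ R ∧ ‖p.2‖ ≤ R} := by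
  have : {p : E × E | ‖p.1‖ ≤ R ∧ ‖p.2‖ ≤ R} = Metric.closedBall 0 R := by
    ext p
    simp [Prod.norm_def]
  rw [this]
  exact isCompact_closedBall _ _

theorem full_compact [FiniteDimensional ℝ E] (N : ℝ × (E × E) → E) (w : E × E → E) :
    HasCompactSupport (full N w) := by
  refine HasCompactSupport.intro (prod_bound_isCompact (E := E) 13) fun p hp => ?_
  simp only [mem_ofPred_eq, not_and_or, not_le] at hp
  rcases hp with hp | hp
  · simp [full, cd0 (show 9 ≤ ‖p.1‖ by linarith), ce0 (show 11 ≤ ‖p.1‖ by linarith)]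
  · simp [full, ce0 (show 11 ≤ ‖p.2‖ by linarith), cf0 hp.le]

theorem base_det_zero [FiniteDimensional ℝ E] [Nontrivial E] {z w : E × E → E} (hz : Adm z)
    (hw : Adm w) (p : E × E) (hp : ‖p.1‖ < 4 ∨ ‖p.2‖ < 4 ∨ 5 < ‖p.1‖ ∨ 5 < ‖p.2‖) :
    (fderiv ℝ (base z w) p).det = 0 := by
  by_cases h1 : ‖p.1‖ < 4
  · refine det_fst _ _ 0 ?_
    filter_upwards [ev1l h1] with q hq
    simp [base, cb0 hq.le]
  by_cases h2 : ‖p.2‖ < 4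
  · refine det_snd _ _ 0 ?_
    filter_upwards [ev2l h2] with q hq
    simp [base, cb0 hq.le]
  rw [not_lt] at h1 h2
  have e1 := ev1g (show 3 < ‖p.1‖ by linarith)
  have e2 := ev2g (show 3 < ‖p.2‖ by linarith)
  have hp' : 5 < ‖p.1‖ ∨ 5 < ‖p.2‖ := by
    rcases hp with h | h | h | h
    · linarith
    · linarith
    · exact Or.inl h
    · exact Or.inr h
  rcases hp' with h | h
  · refine det_fst _ _ 1 ?_
    filter_upwards [e1, e2, ev1g h] with q hq1 hq2 hq3
    have hO : q ∈ OO E := ⟨by linarith, by linarith⟩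
    simp [base, cb1 hq3.le, cl1 hq2.le, hz.2 q hO]
  · refine det_snd _ _ 1 ?_
    filter_upwards [e1, e2, ev2g h] with q hq1 hq2 hq3
    have hO : q ∈ OO E := ⟨by linarith, by linarith⟩
    simp [base, cb1 hq3.le, cl1 hq1.le, hw.2 q hO]

theorem pointwise [FiniteDimensional ℝ E] [Nontrivial E] {N : ℝ × (E × E) → E} {w : E × E → E}
    (hN : AdmH N) (hw : Adm w) (p : E × E) :
    (fderiv ℝ (full N w) p).det - (fderiv ℝ (full (fun x => N (1, x.2)) w) p).det =
    (fderiv ℝ (base (fun p => N (0, p)) w) p).det -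
      (fderiv ℝ (base (fun p => N (1, p)) w) p).det := by
  have hN1 : AdmH (fun x : ℝ × (E × E) => N (1, x.2)) := by
    refine ⟨?_, fun t p hp => hN.2 1 p hp⟩
    refine (hN.adm 1).1.comp contDiff_snd.contDiffOn ?_
    rintro ⟨t, q⟩ hq
    exact hq.2
  have hb0 := base_det_zero (hN.adm 0) hw p
  have hb1 := base_det_zero (hN.adm 1) hw p
  -- vanishing of `full`
  have hf : ∀ M : ℝ × (E × E) → E, AdmH M →
      (‖p.1‖ < 4 ∨ ‖p.2‖ < 4 ∨ 5 < ‖p.2‖ ∨ (5 < ‖p.1‖ ∧ ‖p.1‖ < 8)) →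
      (fderiv ℝ (full M w) p).det = 0 := by
    intro M hM hp
    by_cases h1 : ‖p.1‖ < 4
    · refine det_fst _ _ 0 ?_
      filter_upwards [ev1l h1] with q hq
      simp [full, cb0 hq.le]
    by_cases h2 : ‖p.2‖ < 4
    · refine det_snd _ _ 0 ?_
      filter_upwards [ev2l h2] with q hq
      simp [full, cb0 hq.le]
    by_cases h3 : 9 < ‖p.1‖
    · refine det_fst _ _ 0 ?_
      filter_upwards [ev1g h3] with q hq
      simp [full, cd0 hq.le]
    by_cases h4 : 11 < ‖p.2‖
    · refine det_fst _ _ 0 ?_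
      filter_upwards [ev2g h4] with q hq
      simp [full, ce0 hq.le]
    rw [not_lt] at h1 h2 h3 h4
    have e1 := ev1g (show 3 < ‖p.1‖ by linarith)
    have e2 := ev2g (show 3 < ‖p.2‖ by linarith)
    have e3 := ev1l (show ‖p.1‖ < 10 by linarith)
    have e4 := ev2l (show ‖p.2‖ < 12 by linarith)
    by_cases h5 : 5 < ‖p.2‖
    · refine det_snd _ _ 1 ?_
      filter_upwards [e1, e2, e3, e4, ev2g h5] with q hq1 hq2 hq3 hq4 hq5
      have hO : q ∈ OO E := ⟨by linarith, by linarith⟩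
      simp [full, cl1 hq1.le, ce1 hq3.le, cb1 hq5.le, cf1 hq4.le, hw.2 q hO]
    · rw [not_lt] at h5
      have h6 : 5 < ‖p.1‖ ∧ ‖p.1‖ < 8 := by
        rcases hp with h | h | h | h
        · linarith
        · linarith
        · linarith
        · exact h
      refine det_fst _ _ 1 ?_
      filter_upwards [e2, ev2l (show ‖p.2‖ < 10 by linarith), ev1g h6.1, ev1l h6.2]
        with q hq2 hq3 hq4 hq5
      have hO : q ∈ OO E := ⟨by linarith, by linarith⟩
      simp [full, cb1 hq4.le, cd1 hq5.le, cl1 hq2.le, ce1 hq3.le, hM.2 _ q hO]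
  by_cases h : ‖p.1‖ < 4 ∨ ‖p.2‖ < 4 ∨ 5 < ‖p.2‖
  · have h' : ‖p.1‖ < 4 ∨ ‖p.2‖ < 4 ∨ 5 < ‖p.1‖ ∨ 5 < ‖p.2‖ := by tauto
    have h'' : ‖p.1‖ < 4 ∨ ‖p.2‖ < 4 ∨ 5 < ‖p.2‖ ∨ (5 < ‖p.1‖ ∧ ‖p.1‖ < 8) := by tauto
    rw [hb0 h', hb1 h', hf N hN h'', hf _ hN1 h'']
  simp only [not_or, not_lt] at h
  obtain ⟨h1, h2, h3⟩ := h
  by_cases h4 : 5 < ‖p.1‖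
  · rw [hb0 (by tauto), hb1 (by tauto)]
    by_cases h5 : ‖p.1‖ < 8
    · rw [hf N hN (by tauto), hf _ hN1 (by tauto)]
    · rw [not_lt] at h5
      have : full N w =ᶠ[𝓝 p] full (fun x => N (1, x.2)) w := by
        filter_upwards [ev1g (show 7 < ‖p.1‖ by linarith)] with q hq
        simp [full, ct1 hq.le]
      rw [this.fderiv_eq]
      ring
  · rw [not_lt] at h4
    have e1 := ev1l (show ‖p.1‖ < 6 by linarith)
    have e2 := ev2l (show ‖p.2‖ < 10 by linarith)
    have a1 : full N w =ᶠ[𝓝 p] base (fun p => N (0, p)) w := by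
      filter_upwards [e1, e2] with q hq1 hq2
      simp [full, base, ct0 hq1.le, cd1 (show ‖q.1‖ ≤ 8 by linarith), ce1 hq2.le,
        ce1 (show ‖q.1‖ ≤ 10 by linarith), cf1 (show ‖q.2‖ ≤ 12 by linarith)]
    have a2 : full (fun x => N (1, x.2)) w =ᶠ[𝓝 p] base (fun p => N (1, p)) w := by
      filter_upwards [e1, e2] with q hq1 hq2
      simp [full, base, cd1 (show ‖q.1‖ ≤ 8 by linarith), ce1 hq2.le,
        ce1 (show ‖q.1‖ ≤ 10 by linarith), cf1 (show ‖q.2‖ ≤ 12 by linarith)]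
    rw [a1.fderiv_eq, a2.fderiv_eq]

variable [FiniteDimensional ℝ E] [Nontrivial E] [MeasurableSpace E] [BorelSpace E]

theorem haar_prod : (volume : Measure (E × E)).IsAddHaarMeasure := by
  rw [Measure.volume_eq_prod]
  infer_instance

noncomputable def KK (z w : E × E → E) : ℝ := ∫ p : E × E, (fderiv ℝ (base z w) p).det

theorem base_det_continuous {z w : E × E → E} (hz : Adm z) (hw : Adm w) :
    Continuous fun p => (fderiv ℝ (base z w) p).det :=
  ContinuousLinearMap.continuous_det.comp ((base_contDiff hz hw).continuous_fderiv one_ne_zero)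

theorem base_det_compact {z w : E × E → E} (hz : Adm z) (hw : Adm w) :
    HasCompactSupport fun p => (fderiv ℝ (base z w) p).det := by
  refine HasCompactSupport.intro (prod_bound_isCompact (E := E) 5) fun p hp => ?_
  simp only [mem_ofPred_eq, not_and_or, not_le] at hp
  exact base_det_zero hz hw p (by tauto)

theorem base_det_integrable {z w : E × E → E} (hz : Adm z) (hw : Adm w) :
    Integrable (fun p => (fderiv ℝ (base z w) p).det) (volume : Measure (E × E)) :=
  (base_det_continuous hz hw).integrable_of_hasCompactSupport (base_det_compact hz hw)

theorem KK_homotopy {N : ℝ × (E × E) → E} {w : E × E → E} (hN : AdmH N) (hw : Adm w) :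
    KK (fun p => N (0, p)) w = KK (fun p => N (1, p)) w := by
  have hN1 : AdmH (fun x : ℝ × (E × E) => N (1, x.2)) := by
    refine ⟨?_, fun t p hp => hN.2 1 p hp⟩
    refine (hN.adm 1).1.comp contDiff_snd.contDiffOn ?_
    rintro ⟨t, q⟩ hq
    exact hq.2
  haveI := haar_prod (E := E)
  have i1 := integral_det_fderiv_eq_zero (volume : Measure (E × E)) _ (full_contDiff hN hw)
    (full_compact N w)
  have i2 := integral_det_fderiv_eq_zero (volume : Measure (E × E)) _ (full_contDiff hN1 hw)
    (full_compact _ w)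
  have int : ∀ {M : ℝ × (E × E) → E}, AdmH M →
      Integrable (fun p => (fderiv ℝ (full M w) p).det) (volume : Measure (E × E)) := by
    intro M hM
    refine Continuous.integrable_of_hasCompactSupport
      (ContinuousLinearMap.continuous_det.comp
        ((full_contDiff hM hw).continuous_fderiv one_ne_zero)) ?_
    have h0 : ContinuousLinearMap.det (0 : E × E →L[ℝ] E × E) = 0 :=
      LinearMap.det_zero'' |>.trans (by simp)
    exact ((full_compact M w).fderiv ℝ).comp_left
      (g := fun A : E × E →L[ℝ] E × E => A.det) h0
  rw [← sub_eq_zero, KK, KK, ← integral_sub (base_det_integrable (hN.adm 0) hw)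
    (base_det_integrable (hN.adm 1) hw)]
  rw [← integral_congr_ae (Eventually.of_forall fun p => pointwise hN hw p),
    integral_sub (int hN) (int hN1), i1, i2, sub_zero]

theorem KK_swap (z w : E × E → E) :
    KK z w = KK (fun p => w p.swap) (fun p => z p.swap) := by
  have hb : base (fun p => w p.swap) (fun p => z p.swap) =
      fun p => (base z w p.swap).swap := by
    funext p
    simp [base, mul_comm]
  have hd : ∀ p, (fderiv ℝ (base (fun p => w p.swap) (fun p => z p.swap)) p).det =
      (fderiv ℝ (base z w) p.swap).det := by
    intro p
    let sw : (E × E) ≃L[ℝ] (E × E) := ContinuousLinearEquiv.prodComm ℝ E E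
    have h1 : (base (fun p => w p.swap) (fun p => z p.swap)) = sw ∘ (base z w ∘ sw) := by
      rw [hb]; rfl
    rw [h1, sw.comp_fderiv, sw.comp_right_fderiv]
    have h2 : ((sw : E × E →L[ℝ] E × E).comp ((fderiv ℝ (base z w) (sw p)).comp
        (sw : E × E →L[ℝ] E × E))).det = (fderiv ℝ (base z w) (sw p)).det := by
      simp only [ContinuousLinearMap.det]
      exact LinearMap.det_conj (fderiv ℝ (base z w) (sw p) : E × E →ₗ[ℝ] E × E)
        sw.toLinearEquiv
    exact h2
  rw [KK, KK, integral_congr_ae (Eventually.of_forall hd)]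
  have := (Measure.measurePreserving_swap (μ := (volume : Measure E)) (ν := (volume : Measure E)))
  exact (this.integral_comp (MeasurableEquiv.prodComm.measurableEmbedding) _).symm
end
end TCS

set_option linter.unusedSectionVars false
namespace TCS
open MeasureTheory Set Filter Topology

section
variable {E : Type*} [NormedAddCommGroup E] [InnerProductSpace ℝ E] [FiniteDimensional ℝ E]

theorem det_ne_zero_of_inj (A : E × E →L[ℝ] E × E) (h : ∀ v, A v = 0 → v = 0) : A.det ≠ 0 := by
  intro h0
  have hk := LinearMap.bot_lt_ker_of_det_eq_zero (f := (A : E × E →ₗ[ℝ] E × E)) h0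
  rw [bot_lt_iff_ne_bot] at hk
  apply hk
  rw [LinearMap.ker_eq_bot']
  exact h

theorem det_zero_of_ker (A : E × E →L[ℝ] E × E) (v : E × E) (hv : v ≠ 0) (h : A v = 0) :
    A.det = 0 := by
  by_contra hne
  have hu : IsUnit (LinearMap.det (A : E × E →ₗ[ℝ] E × E)) := isUnit_iff_ne_zero.2 hne
  have hi : Function.Injective A := (LinearEquiv.ofIsUnitDet (v := Module.finBasis ℝ (E × E))
        (v' := Module.finBasis ℝ (E × E)) (f := (A : E × E →ₗ[ℝ] E × E))
        (by rwa [LinearMap.det_toMatrix])).injective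
  exact hv (hi (by rw [h, map_zero]))

theorem det_mul (A B : E × E →L[ℝ] E × E) : (A.comp B).det = A.det * B.det := by
  simp only [ContinuousLinearMap.det]
  exact LinearMap.det_comp _ _

theorem det_nonneg (A : E × E →L[ℝ] E × E)
    (h : ∀ v, 0 ≤ inner ℝ v.1 (A v).1 + inner ℝ v.2 (A v).2) : 0 ≤ A.det := by
  let f : ℝ → ℝ := fun t => ((1 - t) • ContinuousLinearMap.id ℝ (E × E) + t • A).det
  have hc : Continuous f := by
    refine ContinuousLinearMap.continuous_det.comp ?_
    fun_prop
  have hne : ∀ t ∈ Ico (0:ℝ) 1, f t ≠ 0 := by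
    intro t ht
    refine det_ne_zero_of_inj _ fun v hv => ?_
    have h1 := congrArg Prod.fst hv
    have h2 := congrArg Prod.snd hv
    simp only [_root_.add_apply, _root_.smul_apply,
      ContinuousLinearMap.id_apply, Prod.fst_add, Prod.snd_add, Prod.smul_fst, Prod.smul_snd,
      Prod.fst_zero, Prod.snd_zero] at h1 h2
    have h3 := congrArg (fun w => inner ℝ v.1 w) h1
    have h4 := congrArg (fun w => inner ℝ v.2 w) h2
    simp only [inner_add_right, inner_smul_right, inner_zero_right,
      real_inner_self_eq_norm_sq] at h3 h4
    have h5 := mul_nonneg ht.1 (h v)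
    have h6 : 0 < 1 - t := by linarith [ht.2]
    have h7 : (1 - t) * (‖v.1‖ ^ 2 + ‖v.2‖ ^ 2) ≤ 0 := by linarith
    have h8 : ‖v.1‖ ^ 2 + ‖v.2‖ ^ 2 ≤ 0 := by
      by_contra hcon
      rw [not_le] at hcon
      linarith [mul_pos h6 hcon]
    have h9 : ‖v.1‖ = 0 := by nlinarith [sq_nonneg ‖v.1‖, sq_nonneg ‖v.2‖]
    have h10 : ‖v.2‖ = 0 := by nlinarith [sq_nonneg ‖v.1‖, sq_nonneg ‖v.2‖]
    exact Prod.ext (norm_eq_zero.1 h9) (norm_eq_zero.1 h10)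
  have h0 : f 0 = 1 := by
    simp only [f, sub_zero, one_smul, zero_smul, add_zero]
    exact LinearMap.det_id
  have h1 : f 1 = A.det := by simp [f]
  have hpos : ∀ t ∈ Ico (0:ℝ) 1, 0 ≤ f t := by
    intro t ht
    by_contra hneg
    rw [not_le] at hneg
    have := intermediate_value_Icc' ht.1 (hc.continuousOn (s := Icc 0 t))
    obtain ⟨s, hs, hs0⟩ := this ⟨hneg.le, by rw [h0]; exact zero_le_one⟩
    exact hne s ⟨hs.1, hs.2.trans_lt ht.2⟩ hs0
  rw [← h1]
  have hcl : closure (Ico (0:ℝ) 1) = Icc 0 1 := closure_Ico zero_ne_one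
  have h1m : (1:ℝ) ∈ closure (Ico (0:ℝ) 1) := by rw [hcl]; simp
  exact closure_minimal (t := {t | 0 ≤ f t}) hpos (isClosed_le continuous_const hc) h1m

/-- `α` along `a`, `β` on the orthogonal complement. -/
noncomputable def Dg (α β : ℝ) (a : E) : E →L[ℝ] E :=
  α • (innerSL ℝ a).smulRight a + β • (ContinuousLinearMap.id ℝ E - (innerSL ℝ a).smulRight a)

theorem Dg_apply (α β : ℝ) (a v : E) :
    Dg α β a v = α • inner ℝ a v • a + β • (v - inner ℝ a v • a) := by
  simp [Dg]

theorem inner_Dg (α β : ℝ) (a v : E) :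
    inner ℝ v (Dg α β a v) = α * inner ℝ a v ^ 2 + β * (‖v‖ ^ 2 - inner ℝ a v ^ 2) := by
  rw [Dg_apply]
  simp only [inner_add_right, inner_smul_right, inner_sub_right, real_inner_self_eq_norm_sq,
    real_inner_comm a v]
  ring

theorem cs (a v : E) (ha : ‖a‖ = 1) : inner ℝ a v ^ 2 ≤ ‖v‖ ^ 2 := by
  have := abs_real_inner_le_norm a v
  rw [ha, one_mul] at this
  exact sq_le_sq' (by linarith [(abs_le.1 this).1]) (abs_le.1 this).2

theorem inner_Dg_nonneg {α β : ℝ} (hα : 0 ≤ α) (hβ : 0 ≤ β) (a v : E) (ha : ‖a‖ = 1) :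
    0 ≤ inner ℝ v (Dg α β a v) := by
  rw [inner_Dg]
  have := cs a v ha
  have h1 := mul_nonneg hα (sq_nonneg (inner ℝ a v))
  have h2 := mul_nonneg hβ (sub_nonneg.2 this)
  linarith

theorem Dg_inj {α β : ℝ} (hα : 0 < α) (hβ : 0 < β) (a v : E) (ha : ‖a‖ = 1)
    (h : Dg α β a v = 0) : v = 0 := by
  have h1 := inner_Dg α β a v
  rw [h, inner_zero_right] at h1
  have h2 := cs a v ha
  have h3 := mul_nonneg hα.le (sq_nonneg (inner ℝ a v))
  have h4 := mul_nonneg hβ.le (sub_nonneg.2 h2)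
  have h5 : inner ℝ a v ^ 2 = 0 := by
    have : α * inner ℝ a v ^ 2 = 0 := by linarith
    rcases mul_eq_zero.1 this with h | h
    · linarith
    · exact h
  have h6 : ‖v‖ ^ 2 - inner ℝ a v ^ 2 = 0 := by
    have : β * (‖v‖ ^ 2 - inner ℝ a v ^ 2) = 0 := by linarith
    rcases mul_eq_zero.1 this with h | h
    · linarith
    · exact h
  rw [h5, sub_zero] at h6
  exact norm_eq_zero.1 (pow_eq_zero_iff two_ne_zero |>.1 h6)

theorem DD_nonneg {α β γ δ : ℝ} (hα : 0 ≤ α) (hβ : 0 ≤ β) (hγ : 0 ≤ γ) (hδ : 0 ≤ δ) (a c : E)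
    (ha : ‖a‖ = 1) (hc : ‖c‖ = 1) : 0 ≤ ((Dg α β a).prodMap (Dg γ δ c)).det := by
  refine det_nonneg _ fun v => ?_
  exact add_nonneg (inner_Dg_nonneg hα hβ a v.1 ha) (inner_Dg_nonneg hγ hδ c v.2 hc)

theorem DD_pos {α β γ δ : ℝ} (hα : 0 < α) (hβ : 0 < β) (hγ : 0 < γ) (hδ : 0 < δ) (a c : E)
    (ha : ‖a‖ = 1) (hc : ‖c‖ = 1) : 0 < ((Dg α β a).prodMap (Dg γ δ c)).det := by
  refine lt_of_le_of_ne (DD_nonneg hα.le hβ.le hγ.le hδ.le a c ha hc) (Ne.symm ?_)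
  refine det_ne_zero_of_inj _ fun v hv => ?_
  exact Prod.ext (Dg_inj hα hβ a _ ha (congrArg Prod.fst hv))
    (Dg_inj hγ hδ c _ hc (congrArg Prod.snd hv))

/-- The twist `T'`. -/
noncomputable def Tw (a c : E) : E × E →L[ℝ] E × E :=
  ((((innerSL ℝ a).smulRight c).comp (ContinuousLinearMap.fst ℝ E E)) +
    (Dg 0 1 c).comp (ContinuousLinearMap.snd ℝ E E)).prod
  ((Dg 0 1 a).comp (ContinuousLinearMap.fst ℝ E E) +
    ((innerSL ℝ c).smulRight a).comp (ContinuousLinearMap.snd ℝ E E))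

theorem Tw_apply (a c : E) (v : E × E) : Tw a c v =
    (inner ℝ a v.1 • c + (v.2 - inner ℝ c v.2 • c),
      (v.1 - inner ℝ a v.1 • a) + inner ℝ c v.2 • a) := by
  simp [Tw, Dg_apply]

noncomputable def JJ (E : Type*) [NormedAddCommGroup E] [InnerProductSpace ℝ E] :
    E × E →L[ℝ] E × E :=
  (-(ContinuousLinearMap.snd ℝ E E)).prod (ContinuousLinearMap.fst ℝ E E)

theorem JJ_apply (v : E × E) : JJ E v = (-v.2, v.1) := rfl

theorem JJ_pos : 0 < (JJ E).det := by
  refine lt_of_le_of_ne (det_nonneg _ fun v => ?_) (Ne.symm (det_ne_zero_of_inj _ fun v hv => ?_))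
  · rw [JJ_apply]
    simp [real_inner_comm]
  · rw [JJ_apply] at hv
    have h1 := congrArg Prod.fst hv
    have h2 := congrArg Prod.snd hv
    simp only [Prod.fst_zero, Prod.snd_zero, neg_eq_zero] at h1 h2
    exact Prod.ext h2 h1

noncomputable def Rf (a : E) : E →L[ℝ] E := Dg 1 (-1) a

theorem Rf_det (hodd : Odd (Module.finrank ℝ E)) (a : E) (ha : ‖a‖ = 1) : (Rf a).det = 1 := by
  have h1 := (Submodule.det_reflection (𝕜 := ℝ) (ℝ ∙ a))
  have h2 : (Rf a : E →ₗ[ℝ] E) = ((ℝ ∙ a).reflection).toLinearMap := by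
    ext v
    have : (ℝ ∙ a).reflection v = 2 • (ℝ ∙ a).starProjection v - v :=
      Submodule.reflection_apply v
    show Dg 1 (-1) a v = (ℝ ∙ a).reflection v
    rw [this, Submodule.starProjection_unit_singleton ℝ ha, Dg_apply]
    module
  have ha0 : a ≠ 0 := by rintro rfl; simp at ha
  have h3 : Module.finrank ℝ (ℝ ∙ a)ᗮ + 1 = Module.finrank ℝ E := by
    rw [← Submodule.finrank_add_finrank_orthogonal (ℝ ∙ a), finrank_span_singleton ha0, add_comm]
  have h4 : Even (Module.finrank ℝ (ℝ ∙ a)ᗮ) := by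
    rw [← h3] at hodd
    rcases hodd with ⟨k, hk⟩
    exact ⟨k, by omega⟩
  rw [ContinuousLinearMap.det, h2, h1, h4.neg_one_pow]

theorem Tw_nonneg (hodd : Odd (Module.finrank ℝ E)) (a c : E) (ha : ‖a‖ = 1) (hc : ‖c‖ = 1) :
    0 ≤ (Tw a c).det := by
  have hR : ((Rf a).prodMap (ContinuousLinearMap.id ℝ E)).det = 1 := by
    have : ((Rf a).prodMap (ContinuousLinearMap.id ℝ E)).det =
        (Rf a).det * (ContinuousLinearMap.id ℝ E).det := by
      simp only [ContinuousLinearMap.det]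
      exact LinearMap.det_prodMap _ _
    rw [this, Rf_det hodd a ha, one_mul]
    exact LinearMap.det_id
  have h := det_nonneg (((Rf a).prodMap (ContinuousLinearMap.id ℝ E)).comp
    ((JJ E).comp (Tw a c))) (fun v => by
      have ea : inner ℝ a a = (1:ℝ) := by rw [real_inner_self_eq_norm_sq, ha]; norm_num
      have : (((Rf a).prodMap (ContinuousLinearMap.id ℝ E)).comp
          ((JJ E).comp (Tw a c))) v = ((v.1 - inner ℝ a v.1 • a) - inner ℝ c v.2 • a,
            inner ℝ a v.1 • c + (v.2 - inner ℝ c v.2 • c)) := by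
        simp only [ContinuousLinearMap.comp_apply, Tw_apply, JJ_apply]
        refine Prod.ext ?_ rfl
        show Dg 1 (-1) a (-((v.1 - inner ℝ a v.1 • a) + inner ℝ c v.2 • a)) =
          (v.1 - inner ℝ a v.1 • a) - inner ℝ c v.2 • a
        rw [Dg_apply]
        simp only [inner_neg_right, inner_add_right, inner_sub_right, inner_smul_right, ea]
        module
      rw [this]
      simp only [inner_add_right, inner_sub_right, inner_smul_right, real_inner_self_eq_norm_sq,
        real_inner_comm a v.1, real_inner_comm c v.2]
      have := cs a v.1 ha
      have := cs c v.2 hc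
      nlinarith)
  rw [det_mul, det_mul, hR, one_mul] at h
  by_contra hneg
  rw [not_le] at hneg
  linarith [mul_neg_of_pos_of_neg (JJ_pos (E := E)) hneg]

theorem Tw_DD (α β γ δ : ℝ) (a c : E) (ha : ‖a‖ = 1) (hc : ‖c‖ = 1) (v : E × E) :
    Tw a c ((Dg α β a).prodMap (Dg γ δ c) v) =
      (α • inner ℝ a v.1 • c + δ • (v.2 - inner ℝ c v.2 • c),
        β • (v.1 - inner ℝ a v.1 • a) + γ • inner ℝ c v.2 • a) := by
  have ea : inner ℝ a a = (1:ℝ) := by rw [real_inner_self_eq_norm_sq, ha]; norm_num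
  have ec : inner ℝ c c = (1:ℝ) := by rw [real_inner_self_eq_norm_sq, hc]; norm_num
  show Tw a c (Dg α β a v.1, Dg γ δ c v.2) = _
  rw [Tw_apply]
  simp only [Dg_apply]
  simp only [inner_add_right, inner_sub_right, inner_smul_right, ea, ec]
  refine Prod.ext ?_ ?_ <;> dsimp only <;> module
end
end TCS

set_option linter.unusedSectionVars false
namespace TCS
open MeasureTheory Set Filter Topology

section
variable {E : Type*} [NormedAddCommGroup E] [InnerProductSpace ℝ E]

/-- Normalization. -/
noncomputable def nz (v : E) : E := ‖v‖⁻¹ • v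

theorem norm_nz {v : E} (hv : v ≠ 0) : ‖nz v‖ = 1 := by
  rw [nz, norm_smul, norm_inv, norm_norm, inv_mul_cancel₀ (norm_ne_zero_iff.2 hv)]

theorem nz_of_norm {v : E} (hv : ‖v‖ = 1) : nz v = v := by
  rw [nz, hv, inv_one, one_smul]

theorem nz_contDiffAt {v : E} (hv : v ≠ 0) : ContDiffAt ℝ 1 (nz : E → E) v :=
  ((contDiffAt_id.norm ℝ hv).inv (norm_ne_zero_iff.2 hv)).smul contDiffAt_id

noncomputable def xx (p : E × E) : E := nz p.1
noncomputable def yy (p : E × E) : E := nz p.2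

theorem ne_of_OO {p : E × E} (hp : p ∈ OO E) : p.1 ≠ 0 ∧ p.2 ≠ 0 := by
  constructor
  · intro h
    have := hp.1
    rw [h, norm_zero] at this
    linarith
  · intro h
    have := hp.2
    rw [h, norm_zero] at this
    linarith

theorem adm_xx : Adm (xx : E × E → E) :=
  ⟨fun p hp => ((nz_contDiffAt (ne_of_OO hp).1).comp p contDiffAt_fst).contDiffWithinAt,
    fun p hp => norm_nz (ne_of_OO hp).1⟩

theorem adm_yy : Adm (yy : E × E → E) :=
  ⟨fun p hp => ((nz_contDiffAt (ne_of_OO hp).2).comp p contDiffAt_snd).contDiffWithinAt,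
    fun p hp => norm_nz (ne_of_OO hp).2⟩

theorem hasFDerivAt_nrm {v : E} (hv : v ≠ 0) :
    HasFDerivAt (fun w : E => ‖w‖) (innerSL ℝ (nz v)) v := by
  have h := (hasStrictFDerivAt_norm_sq v).hasFDerivAt.sqrt (by
    exact (pow_pos (norm_pos_iff.2 hv) 2).ne')
  have h2 : (fun w : E => √(‖w‖ ^ 2)) = fun w : E => ‖w‖ := by
    funext w
    exact Real.sqrt_sq (norm_nonneg w)
  rw [h2] at h
  refine h.congr_fderiv ?_
  ext w
  simp only [nz, Real.sqrt_sq (norm_nonneg v)]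
  have : ‖v‖ ≠ 0 := norm_ne_zero_iff.2 hv
  simp [inner_smul_left]
  field_simp

theorem hasFDerivAt_nz [FiniteDimensional ℝ E] {v : E} (hv : v ≠ 0) :
    HasFDerivAt (nz : E → E) (‖v‖⁻¹ • Dg 0 1 (nz v)) v := by
  have hn : ‖v‖ ≠ 0 := norm_ne_zero_iff.2 hv
  have h := ((hasDerivAt_inv hn).comp_hasFDerivAt v (hasFDerivAt_nrm hv)).smul (hasFDerivAt_id v)
  refine h.congr_fderiv ?_
  ext w
  simp [Dg_apply, nz, inner_smul_left]
  module

theorem hasFDerivAt_piece [FiniteDimensional ℝ E] (L M : E × E →L[ℝ] E) (p : E × E)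
    (hL : L p ≠ 0) (hM : M p ≠ 0) :
    HasFDerivAt (fun q => cb ‖L q‖ • nz (M q))
      (cb ‖L p‖ • ((‖M p‖⁻¹ • Dg 0 1 (nz (M p))).comp M) +
        (deriv cb ‖L p‖ • (innerSL ℝ (nz (L p))).comp L).smulRight (nz (M p))) p := by
  have hb : HasDerivAt cb (deriv cb ‖L p‖) ‖L p‖ :=
    (cb_cd.differentiable one_ne_zero _).hasDerivAt
  have h1 : HasFDerivAt (fun q => ‖L q‖) ((innerSL ℝ (nz (L p))).comp L) p :=
    (hasFDerivAt_nrm hL).comp p L.hasFDerivAt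
  have h2 := hb.comp_hasFDerivAt p h1
  have h3 : HasFDerivAt (fun q => nz (M q)) ((‖M p‖⁻¹ • Dg 0 1 (nz (M p))).comp M) p :=
    (hasFDerivAt_nz hM).comp p M.hasFDerivAt
  exact h2.smul h3

theorem deriv_cb_nonneg (r : ℝ) : 0 ≤ deriv cb r := by
  have : Monotone cb := fun a b h => Real.smoothTransition.monotone (by linarith)
  exact this.deriv_nonneg

theorem cb_nonneg (r : ℝ) : 0 ≤ cb r := Real.smoothTransition.nonneg _

theorem exists_cb : ∃ r, 4 < r ∧ 0 < deriv cb r ∧ 0 < cb r := by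
  obtain ⟨r, hr, h⟩ := exists_deriv_eq_slope cb (show (4:ℝ) < 5 by norm_num)
    cb_cd.continuous.continuousOn (cb_cd.differentiable one_ne_zero).differentiableOn
  rw [cb1 le_rfl, cb0 le_rfl] at h
  refine ⟨r, hr.1, by rw [h]; norm_num, ?_⟩
  exact Real.smoothTransition.pos_of_pos (by linarith [hr.1])

theorem base_fderiv [FiniteDimensional ℝ E] (M N : E × E →L[ℝ] E) (p : E × E)
    (h1 : 4 ≤ ‖p.1‖) (h2 : 4 ≤ ‖p.2‖) (hM : M p ≠ 0) (hN : N p ≠ 0) (v : E × E) :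
    fderiv ℝ (base (fun q => nz (M q)) (fun q => nz (N q))) p v =
      ((cb ‖p.1‖ * ‖M p‖⁻¹) • (M v - inner ℝ (nz (M p)) (M v) • nz (M p)) +
        (deriv cb ‖p.1‖ * inner ℝ (nz p.1) v.1) • nz (M p),
       (cb ‖p.2‖ * ‖N p‖⁻¹) • (N v - inner ℝ (nz (N p)) (N v) • nz (N p)) +
        (deriv cb ‖p.2‖ * inner ℝ (nz p.2) v.2) • nz (N p)) := by
  have hp1 : p.1 ≠ 0 := fun h => by rw [h, norm_zero] at h1; linarith
  have hp2 : p.2 ≠ 0 := fun h => by rw [h, norm_zero] at h2; linarith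
  have e : base (fun q => nz (M q)) (fun q => nz (N q)) =ᶠ[𝓝 p]
      fun q => (cb ‖ContinuousLinearMap.fst ℝ E E q‖ • nz (M q),
        cb ‖ContinuousLinearMap.snd ℝ E E q‖ • nz (N q)) := by
    filter_upwards [ev1g (show 3 < ‖p.1‖ by linarith), ev2g (show 3 < ‖p.2‖ by linarith)]
      with q hq1 hq2
    simp [base, cl1 hq1.le, cl1 hq2.le]
  have h := (hasFDerivAt_piece (ContinuousLinearMap.fst ℝ E E) M p hp1 hM).prodMk
    (hasFDerivAt_piece (ContinuousLinearMap.snd ℝ E E) N p hp2 hN)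
  rw [e.fderiv_eq, h.fderiv]
  simp [Dg_apply, smul_smul]

variable [FiniteDimensional ℝ E]

theorem det_xy_eq (p : E × E) (h1 : 4 ≤ ‖p.1‖) (h2 : 4 ≤ ‖p.2‖) :
    fderiv ℝ (base xx yy) p =
      (Dg (deriv cb ‖p.1‖) (cb ‖p.1‖ * ‖p.1‖⁻¹) (nz p.1)).prodMap
        (Dg (deriv cb ‖p.2‖) (cb ‖p.2‖ * ‖p.2‖⁻¹) (nz p.2)) := by
  have hp1 : p.1 ≠ 0 := fun h => by rw [h, norm_zero] at h1; linarith
  have hp2 : p.2 ≠ 0 := fun h => by rw [h, norm_zero] at h2; linarith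
  refine ContinuousLinearMap.ext fun v => ?_
  have := base_fderiv (ContinuousLinearMap.fst ℝ E E) (ContinuousLinearMap.snd ℝ E E) p h1 h2
    hp1 hp2 v
  refine Eq.trans this ?_
  show _ = (Dg _ _ _ v.1, Dg _ _ _ v.2)
  rw [Dg_apply, Dg_apply]
  refine Prod.ext ?_ ?_ <;> simp only [ContinuousLinearMap.coe_fst', ContinuousLinearMap.coe_snd']
    <;> module

theorem det_yx_eq (p : E × E) (h1 : 4 ≤ ‖p.1‖) (h2 : 4 ≤ ‖p.2‖) :
    fderiv ℝ (base yy xx) p = (Tw (nz p.1) (nz p.2)).comp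
      ((Dg (deriv cb ‖p.1‖) (cb ‖p.2‖ * ‖p.1‖⁻¹) (nz p.1)).prodMap
        (Dg (deriv cb ‖p.2‖) (cb ‖p.1‖ * ‖p.2‖⁻¹) (nz p.2))) := by
  have hp1 : p.1 ≠ 0 := fun h => by rw [h, norm_zero] at h1; linarith
  have hp2 : p.2 ≠ 0 := fun h => by rw [h, norm_zero] at h2; linarith
  refine ContinuousLinearMap.ext fun v => ?_
  have := base_fderiv (ContinuousLinearMap.snd ℝ E E) (ContinuousLinearMap.fst ℝ E E) p h1 h2
    hp2 hp1 v
  refine Eq.trans this ?_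
  rw [ContinuousLinearMap.comp_apply, Tw_DD _ _ _ _ _ _ (norm_nz hp1) (norm_nz hp2)]
  refine Prod.ext ?_ ?_ <;> simp only [ContinuousLinearMap.coe_fst', ContinuousLinearMap.coe_snd']
    <;> module

theorem det_xx_eq [Nontrivial E] (hd : 2 ≤ Module.finrank ℝ E) (p : E × E) :
    (fderiv ℝ (base xx xx) p).det = 0 := by
  by_cases h : ‖p.1‖ < 4 ∨ ‖p.2‖ < 4
  · exact base_det_zero adm_xx adm_xx p (by tauto)
  simp only [not_or, not_lt] at h
  obtain ⟨h1, h2⟩ := h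
  have hp1 : p.1 ≠ 0 := fun h => by rw [h, norm_zero] at h1; linarith
  have hp2 : p.2 ≠ 0 := fun h => by rw [h, norm_zero] at h2; linarith
  obtain ⟨w, hw, hw0⟩ : ∃ w : E, w ≠ 0 ∧ inner ℝ (nz p.2) w = 0 := by
    have h3 := Submodule.finrank_add_finrank_orthogonal (ℝ ∙ (nz p.2))
    have h4 := finrank_span_le_card (R := ℝ) ({nz p.2} : Set E)
    rw [Set.toFinset_singleton, Finset.card_singleton] at h4
    have h5 : 0 < Module.finrank ℝ (ℝ ∙ (nz p.2))ᗮ := by omega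
    haveI := Module.finrank_pos_iff.1 h5
    obtain ⟨w, hw⟩ := exists_ne (0 : (ℝ ∙ (nz p.2))ᗮ)
    exact ⟨w, fun h => hw (Subtype.ext h), Submodule.mem_orthogonal_singleton_iff_inner_right.1 w.2⟩
  refine det_zero_of_ker _ ((0, w) : E × E) (fun h => hw (congrArg Prod.snd h)) ?_
  have := base_fderiv (ContinuousLinearMap.fst ℝ E E) (ContinuousLinearMap.fst ℝ E E) p h1 h2
    hp1 hp1 (0, w)
  refine Eq.trans this ?_
  simp [hw0]

variable [Nontrivial E] [MeasurableSpace E] [BorelSpace E]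

theorem KK_xx (hd : 2 ≤ Module.finrank ℝ E) : KK (xx : E × E → E) xx = 0 := by
  rw [KK, integral_congr_ae (Eventually.of_forall fun p => det_xx_eq hd p)]
  simp

theorem KK_yy (hd : 2 ≤ Module.finrank ℝ E) : KK (yy : E × E → E) yy = 0 := by
  rw [KK_swap]
  exact KK_xx hd

theorem KK_xy : 0 < KK (xx : E × E → E) yy := by
  haveI := haar_prod (E := E)
  obtain ⟨r, hr4, hr1, hr2⟩ := exists_cb
  obtain ⟨e, he⟩ := exists_norm_eq E (show (0:ℝ) ≤ r by linarith)
  have he0 : e ≠ 0 := fun h => by rw [h, norm_zero] at he; linarith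
  refine (base_det_continuous adm_xx adm_yy).integral_pos_of_hasCompactSupport_nonneg_nonzero
    (base_det_compact adm_xx adm_yy) (fun p => ?_) (x := ((e, e) : E × E)) ?_
  · by_cases h : ‖p.1‖ < 4 ∨ ‖p.2‖ < 4
    · exact (base_det_zero adm_xx adm_yy p (by tauto)).ge
    simp only [not_or, not_lt] at h
    obtain ⟨h1, h2⟩ := h
    have hp1 : p.1 ≠ 0 := fun h => by rw [h, norm_zero] at h1; linarith
    have hp2 : p.2 ≠ 0 := fun h => by rw [h, norm_zero] at h2; linarith
    dsimp only
    rw [det_xy_eq p h1 h2]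
    exact DD_nonneg (deriv_cb_nonneg _) (mul_nonneg (cb_nonneg _) (by positivity))
      (deriv_cb_nonneg _) (mul_nonneg (cb_nonneg _) (by positivity)) _ _ (norm_nz hp1) (norm_nz hp2)
  · rw [det_xy_eq ((e, e) : E × E) (by rw [he]; exact hr4.le) (by rw [he]; exact hr4.le)]
    have : 0 < ‖e‖⁻¹ := by rw [he]; positivity
    refine (DD_pos ?_ ?_ ?_ ?_ _ _ (norm_nz he0) (norm_nz he0)).ne'
    · rwa [he]
    · exact mul_pos (by rwa [he]) this
    · rwa [he]
    · exact mul_pos (by rwa [he]) this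

theorem KK_yx (hodd : Odd (Module.finrank ℝ E)) : 0 ≤ KK (yy : E × E → E) xx := by
  refine integral_nonneg fun p => ?_
  by_cases h : ‖p.1‖ < 4 ∨ ‖p.2‖ < 4
  · exact (base_det_zero adm_yy adm_xx p (by tauto)).ge
  simp only [not_or, not_lt] at h
  obtain ⟨h1, h2⟩ := h
  have hp1 : p.1 ≠ 0 := fun h => by rw [h, norm_zero] at h1; linarith
  have hp2 : p.2 ≠ 0 := fun h => by rw [h, norm_zero] at h2; linarith
  dsimp only
  rw [det_yx_eq p h1 h2, det_mul]
  refine mul_nonneg (Tw_nonneg hodd _ _ (norm_nz hp1) (norm_nz hp2)) ?_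
  exact DD_nonneg (deriv_cb_nonneg _) (mul_nonneg (cb_nonneg _) (by positivity))
      (deriv_cb_nonneg _) (mul_nonneg (cb_nonneg _) (by positivity)) _ _ (norm_nz hp1) (norm_nz hp2)
end
end TCS

set_option linter.unusedSectionVars false
namespace TCS
open MeasureTheory Set Filter Topology

open scoped Manifold in
theorem smooth_select {W F : Type*} [NormedAddCommGroup W] [NormedSpace ℝ W]
    [FiniteDimensional ℝ W] [NormedAddCommGroup F] [NormedSpace ℝ F] (t : W → Set F)
    (ht : ∀ x, Convex ℝ (t x))
    (Hloc : ∀ x, ∃ g : W → F, ContDiffAt ℝ 1 g x ∧ ∀ᶠ y in 𝓝 x, g y ∈ t y) :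
    ∃ g : W → F, ContDiff ℝ 1 g ∧ ∀ x, g x ∈ t x := by
  obtain ⟨g, hg⟩ := exists_contMDiffMap_forall_mem_convex_of_local (n := 1) 𝓘(ℝ, W) ht
    (fun x => by
      obtain ⟨g, hg, hy⟩ := Hloc x
      obtain ⟨u, hu, hxu, hgu⟩ := hg.contDiffOn' le_rfl (by simp)
      refine ⟨{y | y ∈ u ∧ g y ∈ t y}, ?_, g, ?_, fun y hy => hy.2⟩
      · filter_upwards [hu.mem_nhds hxu, hy] with y h1 h2 using ⟨h1, h2⟩
      · rw [contMDiffOn_iff_contDiffOn]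
        refine hgu.mono ?_
        intro y hy
        simp [hy.1])
  exact ⟨g, contMDiff_iff_contDiff.1 g.contMDiff, hg⟩

section
variable {E : Type*} [NormedAddCommGroup E] [InnerProductSpace ℝ E]

/-- Sphere-valued normalization. -/
noncomputable def nzS (e : Metric.sphere (0:E) 1) (v : E) : Metric.sphere (0:E) 1 :=
  open Classical in
  if h : v = 0 then e else ⟨nz v, by rw [mem_sphere_zero_iff_norm]; exact norm_nz h⟩

theorem nzS_coe (e : Metric.sphere (0:E) 1) {v : E} (h : v ≠ 0) : (nzS e v : E) = nz v := by
  simp [nzS, h]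

theorem nzS_continuousAt (e : Metric.sphere (0:E) 1) {v : E} (h : v ≠ 0) :
    ContinuousAt (nzS e) v := by
  rw [Topology.IsInducing.subtypeVal.continuousAt_iff]
  refine (nz_contDiffAt h).continuousAt.congr ?_
  filter_upwards [isOpen_ne.mem_nhds h] with w hw
  exact (nzS_coe e hw).symm

/-- Deforming via a motion planner. -/
theorem gamma_ext {S : Type*} [TopologicalSpace S] [NormalSpace (S × S)] (ι : S → E)
    (hι : Continuous ι) (hn : ∀ s, ‖ι s‖ = 1) (U C : Set (S × S)) (hU : IsOpen U)
    (hC : IsClosed C) (hCU : C ⊆ U) (γ : (S × S) × unitInterval → E)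
    (hγ : ContinuousOn γ (U ×ˢ univ)) (h0 : ∀ p ∈ U, γ (p, 0) = ι p.1)
    (h1 : ∀ p ∈ U, γ (p, 1) = ι p.2) (hγn : ∀ p ∈ U, ∀ t, ‖γ (p, t)‖ = 1) :
    ∃ Γ : (S × S) × unitInterval → E, Continuous Γ ∧ (∀ q, ‖Γ q‖ = 1) ∧
      (∀ p, Γ (p, 0) = ι p.1) ∧ ∀ p ∈ C, Γ (p, 1) = ι p.2 := by
  classical
  obtain ⟨V, hV, hCV, hVU⟩ := normal_exists_closure_subset hC hU hCU
  obtain ⟨f, f0, f1, f01⟩ := exists_continuous_zero_one_of_isClosed (isClosed_compl_iff.2 hV) hC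
    (by rw [Set.disjoint_left]; intro x hx hxC; exact hx (hCV hxC))
  let τ : S × S → unitInterval := fun q => ⟨f q, f01 q⟩
  have hτ : Continuous τ := f.continuous.subtype_mk _
  refine ⟨fun q => if q.1 ∈ U then γ (q.1, q.2 * τ q.1) else ι q.1.1, ?_, ?_, ?_, ?_⟩
  · rw [continuous_iff_continuousAt]
    rintro ⟨q, t⟩
    by_cases hq : q ∈ U
    · have hc : ContinuousAt (fun q : (S × S) × unitInterval => γ (q.1, q.2 * τ q.1)) (q, t) := by
        have h2 : ContinuousAt γ (q, t * τ q) :=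
          hγ.continuousAt ((hU.prod isOpen_univ).mem_nhds ⟨hq, mem_univ _⟩)
        exact ContinuousAt.comp (f := fun q : (S × S) × unitInterval => (q.1, q.2 * τ q.1))
          (g := γ) h2 (by
            refine Continuous.continuousAt ?_
            exact continuous_fst.prodMk (continuous_snd.mul (hτ.comp continuous_fst)))
      refine hc.congr ?_
      filter_upwards [(hU.preimage continuous_fst).mem_nhds (show (q, t).1 ∈ U from hq)] with r hr
      rw [if_pos (show r.1 ∈ U from hr)]
    · have hc : ContinuousAt (fun q : (S × S) × unitInterval => ι q.1.1) (q, t) :=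
        (hι.comp (continuous_fst.comp continuous_fst)).continuousAt
      refine hc.congr ?_
      have hq' : q ∈ (closure V)ᶜ := fun h => hq (hVU h)
      filter_upwards [(isClosed_closure.isOpen_compl.preimage continuous_fst).mem_nhds
        (show (q, t).1 ∈ (closure V)ᶜ from hq')] with r hr
      split_ifs with hrU
      · have : τ r.1 = 0 := Subtype.ext (f0 (fun h => hr (subset_closure h)))
        rw [this, mul_zero, h0 _ hrU]
      · rfl
  · intro q
    dsimp only
    split_ifs with h
    · exact hγn _ h _
    · exact hn _
  · intro p
    dsimp only
    split_ifs with h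
    · rw [zero_mul, h0 _ h]
    · rfl
  · intro p hp
    have : τ p = 1 := Subtype.ext (f1 hp)
    dsimp only
    rw [if_pos (hCU hp), this, mul_one, h1 _ (hCU hp)]

theorem exists_AdmH [FiniteDimensional ℝ E] (e : Metric.sphere (0:E) 1)
    (U C : Set (Metric.sphere (0:E) 1 × Metric.sphere (0:E) 1)) (hU : IsOpen U)
    (hC : IsClosed C) (hCU : C ⊆ U)
    (γ : (Metric.sphere (0:E) 1 × Metric.sphere (0:E) 1) × unitInterval → E)
    (hγ : ContinuousOn γ (U ×ˢ univ)) (h0 : ∀ p ∈ U, γ (p, 0) = p.1)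
    (h1 : ∀ p ∈ U, γ (p, 1) = p.2) (hγn : ∀ p ∈ U, ∀ t, ‖γ (p, t)‖ = 1) :
    ∃ N : ℝ × (E × E) → E, AdmH N ∧ (∀ p ∈ OO E, N (0, p) = xx p) ∧
      ∀ p ∈ OO E, (nzS e p.1, nzS e p.2) ∈ C → N (1, p) = yy p := by
  obtain ⟨Γ, hΓ, Γn, Γ0, Γ1⟩ := gamma_ext (E := E) (fun s : Metric.sphere (0:E) 1 => (s : E))
    continuous_subtype_val (fun s => mem_sphere_zero_iff_norm.1 s.2) U C hU hC hCU γ hγ h0 h1 hγn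
  let q : E × E → Metric.sphere (0:E) 1 × Metric.sphere (0:E) 1 := fun p => (nzS e p.1, nzS e p.2)
  let Z : ℝ × (E × E) → E := fun m => Γ (q m.2, projIcc 0 1 zero_le_one m.1)
  let Ω : Set (E × E) := {p | p.1 ≠ 0 ∧ p.2 ≠ 0}
  have hq : ∀ p ∈ Ω, ContinuousAt q p := fun p hp =>
    ((nzS_continuousAt e hp.1).comp continuousAt_fst).prodMk
      ((nzS_continuousAt e hp.2).comp continuousAt_snd)
  have hZ : ∀ τ, ∀ p ∈ Ω, ContinuousAt Z (τ, p) := by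
    intro τ p hp
    refine hΓ.continuousAt.comp ?_
    exact ((hq p hp).comp (x := (τ, p)) continuousAt_snd).prodMk
      (continuous_projIcc.continuousAt.comp continuousAt_fst)
  have hZ0 : ∀ p ∈ Ω, Z (0, p) = xx p := by
    intro p hp
    simp only [Z]
    rw [projIcc_left]
    exact (Γ0 _).trans (nzS_coe e hp.1)
  have hZ1 : ∀ p ∈ Ω, q p ∈ C → Z (1, p) = yy p := by
    intro p hp hpC
    simp only [Z]
    rw [projIcc_right]
    exact (Γ1 _ hpC).trans (nzS_coe e hp.2)
  let Q : Set (E × E) := {p | 1 ≤ ‖p.1‖ ∧ 1 ≤ ‖p.2‖}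
  have hQ : IsClosed Q := (isClosed_le continuous_const continuous_fst.norm).inter
    (isClosed_le continuous_const continuous_snd.norm)
  have hQΩ : Q ⊆ Ω := by
    intro p hp
    constructor
    · intro h
      have := hp.1
      rw [h, norm_zero] at this
      linarith
    · intro h
      have := hp.2
      rw [h, norm_zero] at this
      linarith
  let t : ℝ × (E × E) → Set E := fun m => {v | m.2 ∈ Q → dist v (Z m) < 1 / 2 ∧
    (m.1 = 0 → v = xx m.2) ∧ (m.1 = 1 → q m.2 ∈ C → v = yy m.2)}
  have ht : ∀ m, Convex ℝ (t m) := by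
    intro m
    by_cases hm : m.2 ∈ Q
    · have : t m = Metric.ball (Z m) (1 / 2) ∩ ({v | m.1 = 0 → v = xx m.2} ∩
          {v | m.1 = 1 → q m.2 ∈ C → v = yy m.2}) := by
        ext v
        simp [t, hm]
      rw [this]
      refine (convex_ball _ _).inter (Convex.inter ?_ ?_)
      · by_cases h : m.1 = 0
        · have : {v | m.1 = 0 → v = xx m.2} = {xx m.2} := by ext v; simp [h]
          rw [this]; exact convex_singleton _
        · have : {v | m.1 = 0 → v = xx m.2} = univ := by ext v; simp [h]
          rw [this]; exact convex_univ
      · by_cases h : m.1 = 1 ∧ q m.2 ∈ C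
        · have : {v | m.1 = 1 → q m.2 ∈ C → v = yy m.2} = {yy m.2} := by ext v; simp [h.1, h.2]
          rw [this]; exact convex_singleton _
        · have : {v | m.1 = 1 → q m.2 ∈ C → v = yy m.2} = univ := by
            ext v
            simp only [mem_ofPred_eq, mem_univ, iff_true]
            tauto
          rw [this]; exact convex_univ
    · have : t m = univ := by
        ext v
        simp [t, hm]
      rw [this]; exact convex_univ
  obtain ⟨g, hg, hgt⟩ := smooth_select t ht (by
    rintro ⟨τ, p⟩
    by_cases hpΩ : p ∈ Q
    swap
    · refine ⟨fun _ => 0, contDiffAt_const, ?_⟩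
      filter_upwards [(hQ.isOpen_compl.preimage continuous_snd).mem_nhds
        (show (τ, p).2 ∈ Qᶜ from hpΩ)] with m hm hmQ
      exact absurd hmQ hm
    replace hpΩ := hQΩ hpΩ
    have close : ∀ g : ℝ × (E × E) → E, ContinuousAt g (τ, p) → g (τ, p) = Z (τ, p) →
        ∀ᶠ m in 𝓝 (τ, p), dist (g m) (Z m) < 1 / 2 := by
      intro g hg he
      have := hg.dist (hZ τ p hpΩ)
      refine this.eventually (gt_mem_nhds ?_)
      rw [he, dist_self]
      norm_num
    have ne : ∀ a, τ ≠ a → ∀ᶠ m in 𝓝 (τ, p), m.1 ≠ a := by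
      intro a ha
      exact (isOpen_ne.preimage continuous_fst).mem_nhds (show (τ, p).1 ≠ a from ha)
    by_cases hτ0 : τ = 0
    · have hx : ContDiffAt ℝ 1 (fun m : ℝ × (E × E) => xx m.2) (τ, p) :=
        (nz_contDiffAt hpΩ.1).comp (τ, p) (contDiffAt_fst.comp (τ, p) contDiffAt_snd)
      refine ⟨fun m => xx m.2, hx, ?_⟩
      filter_upwards [close _ hx.continuousAt (by rw [hτ0, hZ0 p hpΩ]),
        ne 1 (by rw [hτ0]; norm_num)] with m hm1 hm2
      exact fun _ => ⟨hm1, fun _ => rfl, fun h => absurd h hm2⟩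
    by_cases hτ1 : τ = 1 ∧ q p ∈ C
    · have hx : ContDiffAt ℝ 1 (fun m : ℝ × (E × E) => yy m.2) (τ, p) :=
        (nz_contDiffAt hpΩ.2).comp (τ, p) (contDiffAt_snd.comp (τ, p) contDiffAt_snd)
      refine ⟨fun m => yy m.2, hx, ?_⟩
      filter_upwards [close _ hx.continuousAt (by rw [hτ1.1, hZ1 p hpΩ hτ1.2]),
        ne 0 hτ0] with m hm1 hm2
      exact fun _ => ⟨hm1, fun h => absurd h hm2, fun _ _ => rfl⟩
    · have hev : ∀ᶠ m : ℝ × (E × E) in 𝓝 (τ, p), ¬ (m.1 = 1 ∧ q m.2 ∈ C) := by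
        by_cases h : τ = 1
        · have hqC : q p ∈ Cᶜ := fun h' => hτ1 ⟨h, h'⟩
          have h2 : ContinuousAt (fun m : ℝ × (E × E) => q m.2) (τ, p) :=
            (hq p hpΩ).comp (x := (τ, p)) continuousAt_snd
          filter_upwards [h2 (hC.isOpen_compl.mem_nhds hqC)] with m hm hm'
          exact hm hm'.2
        · filter_upwards [ne 1 h] with m hm hm'
          exact hm hm'.1
      refine ⟨fun _ => Z (τ, p), contDiffAt_const, ?_⟩
      filter_upwards [close _ continuousAt_const rfl, ne 0 hτ0, hev] with m hm1 hm2 hm3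
      exact fun _ => ⟨hm1, fun h => absurd h hm2, fun h h' => absurd ⟨h, h'⟩ hm3⟩)
  have hOQ : OO E ⊆ Q := fun p hp => ⟨hp.1.le, hp.2.le⟩
  have gne : ∀ τ, ∀ p ∈ OO E, g (τ, p) ≠ 0 := by
    intro τ p hp h
    have h2 := (hgt (τ, p) (hOQ hp)).1
    rw [h, dist_zero_left, Γn] at h2
    norm_num at h2
  refine ⟨fun m => nz (g m), ⟨?_, ?_⟩, ?_, ?_⟩
  · rintro ⟨τ, p⟩ hp
    exact ((nz_contDiffAt (gne τ p hp.2)).comp (τ, p) hg.contDiffAt).contDiffWithinAt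
  · intro τ p hp
    exact norm_nz (gne τ p hp)
  · intro p hp
    have := (hgt (0, p) (hOQ hp)).2.1 rfl
    dsimp only at this ⊢
    rw [this]
    exact nz_of_norm (adm_xx.2 p hp)
  · intro p hp hpC
    have := (hgt (1, p) (hOQ hp)).2.2 rfl hpC
    dsimp only at this ⊢
    rw [this]
    exact nz_of_norm (adm_yy.2 p hp)
end
end TCS

set_option linter.unusedSectionVars false
namespace TCS
open MeasureTheory Set Filter Topology

section
variable {E : Type*} [NormedAddCommGroup E] [InnerProductSpace ℝ E]
variable [FiniteDimensional ℝ E] [Nontrivial E] 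

theorem base_eventuallyEq {z w z' w' : E × E → E} {p : E × E}
    (hz : z =ᶠ[𝓝 p] z') (hw : w =ᶠ[𝓝 p] w') : base z w =ᶠ[𝓝 p] base z' w' := by
  filter_upwards [hz, hw] with q h1 h2
  simp only [base, h1, h2]

theorem base_congr {z w z' w' : E × E → E} (hz : ∀ p ∈ OO E, z p = z' p)
    (hw : ∀ p ∈ OO E, w p = w' p) : base z w = base z' w' := by
  funext p
  by_cases hp : p ∈ OO E
  · simp only [base, hz p hp, hw p hp]
  · have : ‖p.1‖ ≤ 1 ∨ ‖p.2‖ ≤ 1 := by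
      simp only [OO, mem_ofPred_eq, not_and_or, not_lt] at hp
      exact hp
    rcases this with h | h
    · simp [base, cb0 (show ‖p.1‖ ≤ 4 by linarith), cl0 (show ‖p.1‖ ≤ 2 by linarith)]
    · simp [base, cb0 (show ‖p.2‖ ≤ 4 by linarith), cl0 (show ‖p.2‖ ≤ 2 by linarith)]

variable [MeasurableSpace E] [BorelSpace E]

theorem KK_congr {z w z' w' : E × E → E} (hz : ∀ p ∈ OO E, z p = z' p)
    (hw : ∀ p ∈ OO E, w p = w' p) : KK z w = KK z' w' := by
  rw [KK, KK, base_congr hz hw]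

theorem swap_OO {p : E × E} (hp : p ∈ OO E) : p.swap ∈ OO E := ⟨hp.2, hp.1⟩

theorem adm_swap {z : E × E → E} (hz : Adm z) : Adm (fun p => z p.swap) := by
  refine ⟨hz.1.comp (contDiff_snd.prodMk contDiff_fst).contDiffOn fun p hp => swap_OO hp,
    fun p hp => hz.2 _ (swap_OO hp)⟩

theorem admH_swap {N : ℝ × (E × E) → E} (hN : AdmH N) : AdmH (fun m => N (m.1, m.2.swap)) := by
  refine ⟨hN.1.comp (contDiff_fst.prodMk ((contDiff_snd.comp contDiff_snd).prodMk
    (contDiff_fst.comp contDiff_snd))).contDiffOn ?_, fun t p hp => hN.2 t _ (swap_OO hp)⟩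
  rintro ⟨t, p⟩ hp
  exact ⟨mem_univ _, swap_OO hp.2⟩

theorem KK_homotopy2 {N : ℝ × (E × E) → E} {w : E × E → E} (hN : AdmH N) (hw : Adm w) :
    KK w (fun p => N (0, p)) = KK w (fun p => N (1, p)) := by
  rw [KK_swap w, KK_swap w]
  exact KK_homotopy (admH_swap hN) (adm_swap hw)

theorem core (hodd : Odd (Module.finrank ℝ E)) (hd : 2 ≤ Module.finrank ℝ E)
    (U : Fin 2 → Set (Metric.sphere (0:E) 1 × Metric.sphere (0:E) 1))
    (hU : ∀ i, IsOpen (U i)) (hcov : ⋃ i, U i = univ)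
    (γ : Fin 2 → (Metric.sphere (0:E) 1 × Metric.sphere (0:E) 1) × unitInterval → E)
    (hγ : ∀ i, ContinuousOn (γ i) (U i ×ˢ univ)) (h0 : ∀ i, ∀ p ∈ U i, γ i (p, 0) = p.1)
    (h1 : ∀ i, ∀ p ∈ U i, γ i (p, 1) = p.2) (hγn : ∀ i, ∀ p ∈ U i, ∀ t, ‖γ i (p, t)‖ = 1) :
    False := by
  obtain ⟨v, hv⟩ := exists_norm_eq E (zero_le_one (α := ℝ))
  let e : Metric.sphere (0:E) 1 := ⟨v, mem_sphere_zero_iff_norm.2 hv⟩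
  obtain ⟨V, hVcov, hV, hVU⟩ := exists_iUnion_eq_closure_subset hU
    (fun _ => Set.toFinite _) hcov
  have hN := fun i => exists_AdmH e (U i) (closure (V i)) (hU i) isClosed_closure (hVU i) (γ i)
    (hγ i) (h0 i) (h1 i) (hγn i)
  choose N hA hN0 hN1 using hN
  let z : Fin 2 → E × E → E := fun i p => N i (1, p)
  have hz : ∀ i, Adm (z i) := fun i => (hA i).adm 1
  have germ : ∀ p ∈ OO E, (z 0 =ᶠ[𝓝 p] yy) ∨ (z 1 =ᶠ[𝓝 p] yy) := by
    intro p hp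
    have hq : ContinuousAt (fun p : E × E => (nzS e p.1, nzS e p.2)) p :=
      ((nzS_continuousAt e (ne_of_OO hp).1).comp continuousAt_fst).prodMk
        ((nzS_continuousAt e (ne_of_OO hp).2).comp continuousAt_snd)
    have hmem : (nzS e p.1, nzS e p.2) ∈ ⋃ i, V i := by rw [hVcov]; exact mem_univ _
    obtain ⟨i, hi⟩ := mem_iUnion.1 hmem
    have : z i =ᶠ[𝓝 p] yy := by
      filter_upwards [hq ((hV i).mem_nhds hi), isOpen_OO.mem_nhds hp] with r hr hrO
      exact hN1 i r hrO (subset_closure hr)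
    fin_cases i
    · exact Or.inl this
    · exact Or.inr this
  have key : ∀ p : E × E, (fderiv ℝ (base (z 0) (z 1)) p).det + (fderiv ℝ (base yy yy) p).det =
      (fderiv ℝ (base (z 0) yy) p).det + (fderiv ℝ (base yy (z 1)) p).det := by
    intro p
    by_cases h : ‖p.1‖ < 4 ∨ ‖p.2‖ < 4
    · rw [base_det_zero (hz 0) (hz 1) p (by tauto), base_det_zero adm_yy adm_yy p (by tauto),
        base_det_zero (hz 0) adm_yy p (by tauto), base_det_zero adm_yy (hz 1) p (by tauto)]
    simp only [not_or, not_lt] at h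
    have hp : p ∈ OO E := ⟨by linarith [h.1], by linarith [h.2]⟩
    rcases germ p hp with hg | hg
    · rw [(base_eventuallyEq hg (EventuallyEq.refl _ (z 1))).fderiv_eq,
        (base_eventuallyEq hg (EventuallyEq.refl _ yy)).fderiv_eq, add_comm]
    · rw [(base_eventuallyEq (EventuallyEq.refl _ (z 0)) hg).fderiv_eq,
        (base_eventuallyEq (EventuallyEq.refl _ yy) hg).fderiv_eq]
  have hint : KK (z 0) (z 1) + KK (yy : E × E → E) yy = KK (z 0) yy + KK yy (z 1) := by
    simp only [KK]
    rw [← integral_add (base_det_integrable (hz 0) (hz 1)) (base_det_integrable adm_yy adm_yy),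
      ← integral_add (base_det_integrable (hz 0) adm_yy) (base_det_integrable adm_yy (hz 1))]
    exact integral_congr_ae (Eventually.of_forall key)
  have e1 : KK (z 0) (z 1) = 0 := by
    have a : KK (z 0) (z 1) = KK xx (z 1) := by
      rw [← KK_homotopy (hA 0) (hz 1)]
      exact KK_congr (hN0 0) fun _ _ => rfl
    have b : KK xx (z 1) = KK (xx : E × E → E) xx := by
      rw [← KK_homotopy2 (hA 1) adm_xx]
      exact KK_congr (fun _ _ => rfl) (hN0 1)
    rw [a, b, KK_xx hd]
  have e2 : KK (z 0) yy = KK (xx : E × E → E) yy := by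
    rw [← KK_homotopy (hA 0) adm_yy]
    exact KK_congr (hN0 0) fun _ _ => rfl
  have e3 : KK yy (z 1) = KK (yy : E × E → E) xx := by
    rw [← KK_homotopy2 (hA 1) adm_yy]
    exact KK_congr (fun _ _ => rfl) (hN0 1)
  rw [e1, e2, e3, KK_yy hd] at hint
  have p1 := KK_xy (E := E)
  have p2 := KK_yx (E := E) hodd
  linarith
end
end TCS

namespace TCS
open Filter Topology

theorem planner {X : Type*} [TopologicalSpace X] [Nonempty X] (U : Set (X × X))
    (F : (X × X) × I → X) (hF : ContinuousOn F (U ×ˢ univ)) :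
    ∃ s : X × X → C(I, X), ContinuousOn s U ∧ ∀ p ∈ U, ∀ t, s p t = F (p, t) := by
  classical
  have hF' : Continuous (fun q : U × I => F ((q.1 : X × X), q.2)) := by
    refine hF.comp_continuous ?_ fun q => ⟨q.1.2, mem_univ _⟩
    exact (continuous_subtype_val.comp continuous_fst).prodMk continuous_snd
  let c : C(U, C(I, X)) := ContinuousMap.curry ⟨_, hF'⟩
  let x0 : X := Classical.arbitrary X
  refine ⟨fun p => if h : p ∈ U then c ⟨p, h⟩ else ContinuousMap.const I x0, ?_, ?_⟩
  · rw [continuousOn_iff_continuous_restrict]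
    refine c.continuous.congr fun q => ?_
    simp [Set.restrict, q.2]
  · intro p hp t
    dsimp only
    rw [dif_pos hp]
    rfl

section
variable {n : ℕ} {G : Type*} [Monoid G]
  (ρ : G →* (EuclideanSpace ℝ (Fin (n + 1)) ≃ₗᵢ[ℝ] EuclideanSpace ℝ (Fin (n + 1))))

theorem build (e : ↥(Sph n)) (U : Set (↥(Sph n) × ↥(Sph n)))
    (w : (↥(Sph n) × ↥(Sph n)) × I → EuclideanSpace ℝ (Fin (n + 1)))
    (hw : Continuous w) (hne : ∀ p ∈ U, ∀ t, w (p, t) ≠ 0)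
    (hUG : ∀ g p, p ∈ U → (sphereAct ρ g p.1, sphereAct ρ g p.2) ∈ U)
    (h0 : ∀ p, w (p, 0) = p.1) (h1 : ∀ p, w (p, 1) = p.2)
    (hG : ∀ g p t, w ((sphereAct ρ g p.1, sphereAct ρ g p.2), t) = ρ g (w (p, t))) :
    (∀ g p, p ∈ U → (sphereAct ρ g p.1, sphereAct ρ g p.2) ∈ U) ∧
      ∃ s : ↥(Sph n) × ↥(Sph n) → C(I, ↥(Sph n)),
        ContinuousOn s U ∧
        (∀ p ∈ U, s p 0 = p.1 ∧ s p 1 = p.2) ∧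
        (∀ g p, p ∈ U → ∀ t : I,
          s (sphereAct ρ g p.1, sphereAct ρ g p.2) t = sphereAct ρ g (s p t)) := by
  refine ⟨hUG, ?_⟩
  have : Nonempty ↥(Sph n) := ⟨e⟩
  obtain ⟨s, hs, hst⟩ := planner U (fun q => nzS e (w q)) (by
    rintro ⟨p, t⟩ hp
    exact ((nzS_continuousAt e (hne p hp.1 t)).comp hw.continuousAt).continuousWithinAt)
  have unit : ∀ x : ↥(Sph n), ‖(x : EuclideanSpace ℝ (Fin (n + 1)))‖ = 1 :=
    fun x => mem_sphere_zero_iff_norm.1 x.2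
  refine ⟨s, hs, fun p hp => ⟨?_, ?_⟩, fun g p hp t => ?_⟩
  · rw [hst p hp]
    refine Subtype.ext ?_
    rw [nzS_coe e (hne p hp 0), h0, nz_of_norm (unit _)]
  · rw [hst p hp]
    refine Subtype.ext ?_
    rw [nzS_coe e (hne p hp 1), h1, nz_of_norm (unit _)]
  · rw [hst p hp, hst _ (hUG g p hp)]
    refine Subtype.ext ?_
    rw [nzS_coe e (hne _ (hUG g p hp) t), hG]
    show _ = ρ g (nzS e (w (p, t)) : EuclideanSpace ℝ (Fin (n + 1)))
    rw [nzS_coe e (hne p hp t), nz, nz, (ρ g).norm_map, (ρ g).map_smul]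

theorem segment_ne {E : Type*} [NormedAddCommGroup E] [NormedSpace ℝ E] {x y : E} (hx : ‖x‖ = 1)
    (hy : ‖y‖ = 1) (hxy : y ≠ -x) {a b : ℝ} (ha : 0 ≤ a) (hb : 0 ≤ b) (hab : a + b = 1) :
    a • x + b • y ≠ 0 := by
  intro h
  have h1 : b • y = -(a • x) := by rw [eq_neg_iff_add_eq_zero, add_comm]; exact h
  have h2 := congrArg norm h1
  rw [norm_neg, norm_smul, norm_smul, hx, hy, mul_one, mul_one, Real.norm_of_nonneg ha,
    Real.norm_of_nonneg hb] at h2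
  have h3 : b ≠ 0 := by intro h; linarith
  rw [← h2, ← smul_neg] at h1
  exact hxy (smul_right_injective E h3 h1)

theorem coe_act (g : G) (x : ↥(Sph n)) :
    ((sphereAct ρ g x : ↥(Sph n)) : EuclideanSpace ℝ (Fin (n + 1))) = ρ g x := rfl

theorem act_continuous (g : G) : Continuous (sphereAct ρ g) :=
  ((ρ g).continuous.comp continuous_subtype_val).subtype_mk _

/-- Set of pairs avoiding the antipode of `e`. -/
def Ue (e : EuclideanSpace ℝ (Fin (n + 1))) : Set (↥(Sph n) × ↥(Sph n)) :=
  {p | (p.1 : EuclideanSpace ℝ (Fin (n + 1))) ≠ -e ∧ (p.2 : EuclideanSpace ℝ (Fin (n + 1))) ≠ -e}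

/-- Set of non-antipodal pairs. -/
def U1 (n : ℕ) : Set (↥(Sph n) × ↥(Sph n)) :=
  {p | (p.2 : EuclideanSpace ℝ (Fin (n + 1))) ≠ -p.1}

theorem Ue_open (e : EuclideanSpace ℝ (Fin (n + 1))) : IsOpen (Ue e) :=
  (isOpen_ne_fun (continuous_subtype_val.comp continuous_fst) continuous_const).inter
    (isOpen_ne_fun (continuous_subtype_val.comp continuous_snd) continuous_const)

theorem U1_open : IsOpen (U1 n) :=
  isOpen_ne_fun (continuous_subtype_val.comp continuous_snd)
    (continuous_subtype_val.comp continuous_fst).neg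

theorem build_Ue (e : ↥(Sph n)) (he : ∀ g, ρ g (e : EuclideanSpace ℝ (Fin (n + 1))) = e) :
    (∀ g p, p ∈ Ue (e : EuclideanSpace ℝ (Fin (n + 1))) →
      (sphereAct ρ g p.1, sphereAct ρ g p.2) ∈ Ue (e : EuclideanSpace ℝ (Fin (n + 1)))) ∧
      ∃ s : ↥(Sph n) × ↥(Sph n) → C(I, ↥(Sph n)),
        ContinuousOn s (Ue (e : EuclideanSpace ℝ (Fin (n + 1)))) ∧
        (∀ p ∈ Ue (e : EuclideanSpace ℝ (Fin (n + 1))), s p 0 = p.1 ∧ s p 1 = p.2) ∧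
        (∀ g p, p ∈ Ue (e : EuclideanSpace ℝ (Fin (n + 1))) → ∀ t : I,
          s (sphereAct ρ g p.1, sphereAct ρ g p.2) t = sphereAct ρ g (s p t)) := by
  have unit : ∀ x : ↥(Sph n), ‖(x : EuclideanSpace ℝ (Fin (n + 1)))‖ = 1 :=
    fun x => mem_sphere_zero_iff_norm.1 x.2
  refine build ρ e _ (fun q => (max (1 - 2 * (q.2 : ℝ)) 0) • (q.1.1 : EuclideanSpace ℝ _) +
    (1 - |2 * (q.2 : ℝ) - 1|) • (e : EuclideanSpace ℝ _) +
    (max (2 * (q.2 : ℝ) - 1) 0) • (q.1.2 : EuclideanSpace ℝ _)) (by fun_prop) ?_ ?_ ?_ ?_ ?_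
  · rintro p hp t
    have t0 := t.2.1
    have t1 := t.2.2
    dsimp only
    rcases le_total (t : ℝ) (1 / 2) with h | h
    · rw [max_eq_left (by linarith), max_eq_right (by linarith), zero_smul, add_zero,
        abs_of_nonpos (by linarith)]
      refine segment_ne (unit _) (unit _) (fun h => hp.1 ?_) (by linarith) (by linarith)
        (by ring)
      rw [h, neg_neg]
    · rw [max_eq_right (by linarith), max_eq_left (by linarith), zero_smul, zero_add,
        abs_of_nonneg (by linarith)]
      exact segment_ne (unit _) (unit _) hp.2 (by linarith) (by linarith) (by ring)
  · intro g p hp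
    refine ⟨fun h => hp.1 ?_, fun h => hp.2 ?_⟩
    · apply (ρ g).injective
      rw [map_neg, he]
      exact h
    · apply (ρ g).injective
      rw [map_neg, he]
      exact h
  · intro p
    norm_num
  · intro p
    norm_num
  · intro g p t
    simp only [map_add, map_smul, he, coe_act]

theorem build_U1 (e : ↥(Sph n)) :
    (∀ g p, p ∈ U1 n → (sphereAct ρ g p.1, sphereAct ρ g p.2) ∈ U1 n) ∧
      ∃ s : ↥(Sph n) × ↥(Sph n) → C(I, ↥(Sph n)),
        ContinuousOn s (U1 n) ∧
        (∀ p ∈ U1 n, s p 0 = p.1 ∧ s p 1 = p.2) ∧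
        (∀ g p, p ∈ U1 n → ∀ t : I,
          s (sphereAct ρ g p.1, sphereAct ρ g p.2) t = sphereAct ρ g (s p t)) := by
  have unit : ∀ x : ↥(Sph n), ‖(x : EuclideanSpace ℝ (Fin (n + 1)))‖ = 1 :=
    fun x => mem_sphere_zero_iff_norm.1 x.2
  refine build ρ e _ (fun q => (1 - (q.2 : ℝ)) • (q.1.1 : EuclideanSpace ℝ _) +
    (q.2 : ℝ) • (q.1.2 : EuclideanSpace ℝ _)) (by fun_prop) ?_ ?_ ?_ ?_ ?_
  · rintro p hp t
    exact segment_ne (unit _) (unit _) hp (by linarith [t.2.2]) t.2.1 (by ring)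
  · intro g p hp h
    refine hp ?_
    apply (ρ g).injective
    rw [map_neg]
    exact h
  · intro p
    norm_num
  · intro p
    norm_num
  · intro g p t
    simp only [map_add, map_smul, coe_act]

theorem cover_three (V : Submodule ℝ (EuclideanSpace ℝ (Fin (n + 1))))
    (hV : 2 ≤ Module.finrank ℝ V) (hVfix : ∀ g : G, ∀ v ∈ V, ρ g v = v) :
    eqTCcover (sphereAct ρ) 3 := by
  let b := stdOrthonormalBasis ℝ V
  let i0 : Fin (Module.finrank ℝ V) := ⟨0, by omega⟩
  let i1 : Fin (Module.finrank ℝ V) := ⟨1, by omega⟩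
  let e : ↥(Sph n) := ⟨(b i0 : EuclideanSpace ℝ (Fin (n + 1))),
    mem_sphere_zero_iff_norm.2 (b.orthonormal.1 i0)⟩
  let f : ↥(Sph n) := ⟨(b i1 : EuclideanSpace ℝ (Fin (n + 1))),
    mem_sphere_zero_iff_norm.2 (b.orthonormal.1 i1)⟩
  have hee : inner ℝ (e : EuclideanSpace ℝ (Fin (n + 1))) e = (1 : ℝ) := by
    rw [real_inner_self_eq_norm_sq, mem_sphere_zero_iff_norm.1 e.2]; norm_num
  have hef : inner ℝ (e : EuclideanSpace ℝ (Fin (n + 1))) f = (0 : ℝ) :=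
    b.orthonormal.2 (show i0 ≠ i1 by simp [i0, i1])
  refine ⟨![U1 n, Ue (e : EuclideanSpace ℝ (Fin (n + 1))), Ue (f : EuclideanSpace ℝ (Fin (n + 1)))],
    ?_, ?_, ?_⟩
  · intro i
    fin_cases i
    · exact U1_open
    · exact Ue_open _
    · exact Ue_open _
  · rw [eq_univ_iff_forall]
    rintro p
    rw [mem_iUnion]
    by_contra hcon
    push Not at hcon
    have c0 : p ∉ U1 n := hcon 0
    have c1 : p ∉ Ue (e : EuclideanSpace ℝ (Fin (n + 1))) := hcon 1
    have c2 : p ∉ Ue (f : EuclideanSpace ℝ (Fin (n + 1))) := hcon 2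
    simp only [U1, Ue, mem_ofPred_eq, not_and_or, not_not] at c0 c1 c2
    have k1 : (p.1 : EuclideanSpace ℝ (Fin (n + 1))) = -e ∨
        (p.1 : EuclideanSpace ℝ (Fin (n + 1))) = e := by
      rcases c1 with h | h
      · exact Or.inl h
      · rw [c0] at h
        exact Or.inr (neg_injective h)
    have k2 : (p.1 : EuclideanSpace ℝ (Fin (n + 1))) = -f ∨
        (p.1 : EuclideanSpace ℝ (Fin (n + 1))) = f := by
      rcases c2 with h | h
      · exact Or.inl h
      · rw [c0] at h
        exact Or.inr (neg_injective h)
    have k3 : inner ℝ (e : EuclideanSpace ℝ (Fin (n + 1))) p.1 ≠ (0 : ℝ) := by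
      rcases k1 with h | h
      · rw [h, inner_neg_right, hee]; norm_num
      · rw [h, hee]; norm_num
    apply k3
    rcases k2 with h | h
    · rw [h, inner_neg_right, hef]; norm_num
    · rw [h, hef]
  · intro i
    fin_cases i
    · exact build_U1 ρ e
    · exact build_Ue ρ e fun g => hVfix g _ (b i0).2
    · exact build_Ue ρ f fun g => hVfix g _ (b i1).2

theorem no_cover_full (hn : 2 ≤ n) (he : Even n) : ¬ eqTCcover (sphereAct ρ) 2 := by
  rintro ⟨U, hU, hcov, hs⟩
  choose hG s hsc hs01 hsG using hs
  refine core (E := EuclideanSpace ℝ (Fin (n + 1))) ?_ ?_ U hU hcov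
    (fun i q => (s i q.1 q.2 : EuclideanSpace ℝ (Fin (n + 1)))) ?_ ?_ ?_ ?_
  · rw [finrank_euclideanSpace_fin]
    exact he.add_one
  · rw [finrank_euclideanSpace_fin]
    omega
  · intro i
    refine continuous_subtype_val.comp_continuousOn ?_
    have h1 : ContinuousOn (fun q : (↥(Sph n) × ↥(Sph n)) × I => (s i q.1, q.2))
        (U i ×ˢ univ) :=
      ((hsc i).comp continuousOn_fst fun q hq => hq.1).prodMk continuousOn_snd
    exact continuous_eval.comp_continuousOn h1
  · intro i p hp
    exact congrArg Subtype.val (hs01 i p hp).1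
  · intro i p hp
    exact congrArg Subtype.val (hs01 i p hp).2
  · intro i p hp t
    exact mem_sphere_zero_iff_norm.1 (s i p t).2

theorem no_cover_fixed (V : Submodule ℝ (EuclideanSpace ℝ (Fin (n + 1)))) (k : ℕ)
    (hk : 2 ≤ k) (he : Even k) (hV : Module.finrank ℝ V = k + 1)
    (hfixV : ∀ x : ↥(Sph n), (∀ g : G, sphereAct ρ g x = x) ↔
        (x : EuclideanSpace ℝ (Fin (n + 1))) ∈ V) : ¬ eqTCcover (sphereAct ρ) 2 := by
  rintro ⟨U, hU, hcov, hs⟩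
  choose hG s hsc hs01 hsG using hs
  haveI : Nontrivial V := Module.finrank_pos_iff.1 (by rw [hV]; omega : 0 < Module.finrank ℝ V)
  let ι : Metric.sphere (0 : V) 1 → ↥(Sph n) := fun v =>
    ⟨((v : V) : EuclideanSpace ℝ (Fin (n + 1))), by
      rw [mem_sphere_zero_iff_norm]
      exact mem_sphere_zero_iff_norm.1 v.2⟩
  have hι : Continuous ι :=
    (continuous_subtype_val.comp continuous_subtype_val).subtype_mk _
  let κ : Metric.sphere (0 : V) 1 × Metric.sphere (0 : V) 1 → ↥(Sph n) × ↥(Sph n) :=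
    fun p => (ι p.1, ι p.2)
  have hκ : Continuous κ := (hι.comp continuous_fst).prodMk (hι.comp continuous_snd)
  have hmem : ∀ i p, κ p ∈ U i → ∀ t, (s i (κ p) t : EuclideanSpace ℝ (Fin (n + 1))) ∈ V := by
    intro i p hp t
    rw [← hfixV]
    intro g
    rw [← hsG i g _ hp t]
    have e1 : sphereAct ρ g (κ p).1 = (κ p).1 := (hfixV (κ p).1).2 p.1.1.2 g
    have e2 : sphereAct ρ g (κ p).2 = (κ p).2 := (hfixV (κ p).2).2 p.2.1.2 g
    rw [e1, e2]
  have hproj : ∀ v (hv : v ∈ V), V.orthogonalProjectionOnto v = ⟨v, hv⟩ := fun v hv =>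
    Submodule.orthogonalProjectionOnto_mem_subspace_eq_self (⟨v, hv⟩ : V)
  refine core (E := V) ?_ ?_ (fun i => κ ⁻¹' (U i)) (fun i => (hU i).preimage hκ) ?_
    (fun i q => V.orthogonalProjectionOnto (s i (κ q.1) q.2 : EuclideanSpace ℝ (Fin (n + 1))))
    ?_ ?_ ?_ ?_
  · rw [hV]
    exact he.add_one
  · rw [hV]
    omega
  · rw [← preimage_iUnion, hcov, preimage_univ]
  · intro i
    refine V.orthogonalProjectionOnto.continuous.comp_continuousOn
      (continuous_subtype_val.comp_continuousOn ?_)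
    have h1 : ContinuousOn (fun q : (Metric.sphere (0 : V) 1 × Metric.sphere (0 : V) 1) × I =>
        (s i (κ q.1), q.2)) ((κ ⁻¹' (U i)) ×ˢ univ) :=
      ((hsc i).comp (hκ.comp continuous_fst).continuousOn fun q hq => hq.1).prodMk continuousOn_snd
    exact continuous_eval.comp_continuousOn h1
  · intro i p hp
    dsimp only
    rw [hproj _ (hmem i p hp 0)]
    refine Subtype.ext ?_
    have h := congrArg (fun x : ↥(Sph n) => (x : EuclideanSpace ℝ (Fin (n + 1)))) (hs01 i (κ p) hp).1
    exact h
  · intro i p hp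
    dsimp only
    rw [hproj _ (hmem i p hp 1)]
    refine Subtype.ext ?_
    have h := congrArg (fun x : ↥(Sph n) => (x : EuclideanSpace ℝ (Fin (n + 1)))) (hs01 i (κ p) hp).2
    exact h
  · intro i p hp t
    dsimp only
    rw [hproj _ (hmem i p hp t)]
    exact mem_sphere_zero_iff_norm.1 (s i (κ p) t).2

theorem cover_one_two (h : eqTCcover (sphereAct ρ) 1) : eqTCcover (sphereAct ρ) 2 := by
  obtain ⟨U, hU, hcov, hs⟩ := h
  refine ⟨fun _ => U 0, fun _ => hU 0, ?_, fun _ => hs 0⟩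
  rw [iUnion_const]
  rw [← hcov]
  ext x
  simp
end
end TCS

/-- Let `ℤ/p` (`p` prime) act linearly on `S^n` with fixed point set the
great `k`-sphere cut out by a pointwise-fixed subspace `V` of dimension `k + 1`, where
`0 < k < n`.  If `n` is even or `k` is even, then `TC_{ℤ/p}(S^n) = 3`. -/
theorem eqTC_linear_zmod_sphere_eq_three (p : ℕ) (hp : p.Prime) (n k : ℕ)
    (hk : 0 < k) (hkn : k < n)
    (ρ : Multiplicative (ZMod p) →*
      (EuclideanSpace ℝ (Fin (n + 1)) ≃ₗᵢ[ℝ] EuclideanSpace ℝ (Fin (n + 1))))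
    (V : Submodule ℝ (EuclideanSpace ℝ (Fin (n + 1))))
    (hV : Module.finrank ℝ V = k + 1)
    (hVfix : ∀ g : Multiplicative (ZMod p), ∀ v ∈ V, ρ g v = v)
    (hfixV : ∀ x : ↥(Sph n),
      (∀ g : Multiplicative (ZMod p), sphereAct ρ g x = x) ↔
        (x : EuclideanSpace ℝ (Fin (n + 1))) ∈ V)
    (heven : Even n ∨ Even k) :
    eqTC (sphereAct ρ) = 3 := by
  have hno : ¬ eqTCcover (sphereAct ρ) 2 := by
    rcases heven with he | he
    · exact TCS.no_cover_full ρ (by omega) he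
    · refine TCS.no_cover_fixed ρ V k ?_ he hV hfixV
      rcases he with ⟨j, hj⟩
      omega
  refine le_antisymm (sInf_le ⟨3, rfl, by norm_num,
    TCS.cover_three ρ V (by omega) hVfix⟩) (le_sInf ?_)
  rintro _ ⟨m, rfl, hm1, hm⟩
  have h1 : m ≠ 1 := by
    rintro rfl
    exact hno (TCS.cover_one_two ρ hm)
  have h2 : m ≠ 2 := by
    rintro rfl
    exact hno hm
  have : 3 ≤ m := by omega
  exact_mod_cast this
end
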